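/- Consider lossless transmission at source-channel rate b = 1 of arbitrarily correlated sources (S1, S2) over a DM compound multiple access channel p(y1,y2|x1,x2) with side information W1 at receiver 1 and W2 at receiver 2, where both receivers must reconstruct both sources. Rate 1 is achievable if there exists a joint distribution of the form p(q,s1,s2,w1,w2,x1,x2,y1,y2) = p(q)·p(s1,s2,w1,w2)·p(x1|q,s1)·p(x2|q,s2)·p(y1,y2|x1,x2) such that for each k = 1, 2: H(S1|S2,Wk) < I(X1;Yk|X2,S2,Wk,Q), H(S2|S1,Wk) < I(X2;Yk|X1,S1,Wk,Q), H(S1,S2|U,Wk) < I(X1,X2;Yk|U,Wk,Q), and H(S1,S2|Wk) < I(X1,X2;Yk|Wk), where U is the Gács–Körner common part of S1 and S2. -/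

import Mathlib

open scoped BigOperators Classical

noncomputable section

/-- Probability that the random variable `X` equals `a`, under the pmf `μ`
on the finite sample space `Ω`. -/
def prD {Ω α : Type} [Fintype Ω] (μ : Ω → ℝ) (X : Ω → α) (a : α) : ℝ :=
  ∑ ω, if X ω = a then μ ω else 0

/-- Shannon entropy (in nats) of the random variable `X` under the pmf `μ`. -/
def ent {Ω α : Type} [Fintype Ω] [Fintype α] (μ : Ω → ℝ) (X : Ω → α) : ℝ :=
  -∑ a, prD μ X a * Real.log (prD μ X a)

/-- Conditional entropy `H(X | Y)` under the pmf `μ`. -/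
def condEnt {Ω α β : Type} [Fintype Ω] [Fintype α] [Fintype β]
    (μ : Ω → ℝ) (X : Ω → α) (Y : Ω → β) : ℝ :=
  ent μ (fun ω => (X ω, Y ω)) - ent μ Y

/-- Mutual information `I(X ; Y)` under the pmf `μ`. -/
def mutInf {Ω α β : Type} [Fintype Ω] [Fintype α] [Fintype β]
    (μ : Ω → ℝ) (X : Ω → α) (Y : Ω → β) : ℝ :=
  ent μ X + ent μ Y - ent μ (fun ω => (X ω, Y ω))

/-- Conditional mutual information `I(X ; Y | Z)` under the pmf `μ`. -/
def condMutInf {Ω α β γ : Type} [Fintype Ω] [Fintype α] [Fintype β] [Fintype γ]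
    (μ : Ω → ℝ) (X : Ω → α) (Y : Ω → β) (Z : Ω → γ) : ℝ :=
  condEnt μ X Z - condEnt μ X (fun ω => (Y ω, Z ω))

/-- `p` is a probability mass function on the finite type `α`. -/
def IsPmf {α : Type} [Fintype α] (p : α → ℝ) : Prop :=
  (∀ a, 0 ≤ p a) ∧ ∑ a, p a = 1

/-- `(u1, u2)` (with values in `Fin nu`) is a Gács–Körner common part of the sources `S1`
and `S2` (obtained from the sample space `R` via the projections `projS1`, `projS2`)
under the pmf `pS`: it is a common deterministic function of both sources (a.s.), and it
has maximal entropy among all such common functions. -/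
def IsGKCommonPart {S1 S2 R : Type} [Fintype S1] [Fintype S2] [Fintype R]
    (pS : R → ℝ) (projS1 : R → S1) (projS2 : R → S2) {nu : ℕ}
    (u1 : S1 → Fin nu) (u2 : S2 → Fin nu) : Prop :=
  (∀ r, 0 < pS r → u1 (projS1 r) = u2 (projS2 r)) ∧
  ∀ (k : ℕ) (v1 : S1 → Fin k) (v2 : S2 → Fin k),
    (∀ r, 0 < pS r → v1 (projS1 r) = v2 (projS2 r)) →
    ent pS (fun r => v1 (projS1 r)) ≤ ent pS (fun r => u1 (projS1 r))

/-- Average probability of error of the joint source-channel code `(f1, f2, g1, g2)` for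
transmitting the i.i.d. source blocks `(S1^m, S2^m)` over `n` uses of the DM compound MAC
`chan` to two receivers having side information `W1^m` and `W2^m`, each of which must
reconstruct both source blocks. -/
def cmacErr {S1 S2 W1 W2 X1 X2 Y1 Y2 : Type} [Fintype S1] [Fintype S2] [Fintype W1]
    [Fintype W2] [Fintype X1] [Fintype X2] [Fintype Y1] [Fintype Y2]
    (pS : S1 × S2 × W1 × W2 → ℝ) (chan : X1 → X2 → Y1 × Y2 → ℝ) (m n : ℕ)
    (f1 : (Fin m → S1) → Fin n → X1) (f2 : (Fin m → S2) → Fin n → X2)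
    (g1 : (Fin n → Y1) → (Fin m → W1) → (Fin m → S1) × (Fin m → S2))
    (g2 : (Fin n → Y2) → (Fin m → W2) → (Fin m → S1) × (Fin m → S2)) : ℝ :=
  ∑ sb : Fin m → S1 × S2 × W1 × W2, ∑ yb : Fin n → Y1 × Y2,
    ((∏ i, pS (sb i)) *
      ∏ j, chan (f1 (fun i => (sb i).1) j) (f2 (fun i => (sb i).2.1) j) (yb j)) *
    (if g1 (fun j => (yb j).1) (fun i => (sb i).2.2.1)
          = (fun i => (sb i).1, fun i => (sb i).2.1)
        ∧ g2 (fun j => (yb j).2) (fun i => (sb i).2.2.2)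
          = (fun i => (sb i).1, fun i => (sb i).2.1)
      then 0 else 1)

/-- Source-channel rate `b` is achievable for the compound MAC with receiver side
information, where both receivers must losslessly reconstruct both sources. -/
def cmacAchievable {S1 S2 W1 W2 X1 X2 Y1 Y2 : Type} [Fintype S1] [Fintype S2]
    [Fintype W1] [Fintype W2] [Fintype X1] [Fintype X2] [Fintype Y1] [Fintype Y2]
    (pS : S1 × S2 × W1 × W2 → ℝ) (chan : X1 → X2 → Y1 × Y2 → ℝ) (b : ℝ) : Prop :=
  ∀ ε : ℝ, 0 < ε → ∃ m n : ℕ, 0 < m ∧ 0 < n ∧ (n : ℝ) = b * m ∧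
    ∃ (f1 : (Fin m → S1) → Fin n → X1) (f2 : (Fin m → S2) → Fin n → X2)
      (g1 : (Fin n → Y1) → (Fin m → W1) → (Fin m → S1) × (Fin m → S2))
      (g2 : (Fin n → Y2) → (Fin m → W2) → (Fin m → S1) × (Fin m → S2)),
      cmacErr pS chan m n f1 f2 g1 g2 < ε

/-- The single-letter channel input/output distribution
`p(q,x1,x2,y1,y2) = p(q) p(x1|q) p(x2|q) p(y1,y2|x1,x2)`. -/
def cmacChanMeasure {X1 X2 Y1 Y2 : Type} (nq : ℕ) (pq : Fin nq → ℝ)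
    (px1 : Fin nq → X1 → ℝ) (px2 : Fin nq → X2 → ℝ)
    (chan : X1 → X2 → Y1 × Y2 → ℝ) : Fin nq × X1 × X2 × (Y1 × Y2) → ℝ :=
  fun z => pq z.1 * px1 z.1 z.2.1 * px2 z.1 z.2.2.1 * chan z.2.1 z.2.2.1 z.2.2.2

/-- The joint single-letter distribution
`p(q,s1,s2,w1,w2,x1,x2,y1,y2) = p(q) p(s1,s2,w1,w2) p(x1|q,s1) p(x2|q,s2) p(y1,y2|x1,x2)`. -/
def cmacJointMeasure {S1 S2 W1 W2 X1 X2 Y1 Y2 : Type} (nq : ℕ)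
    (pq : Fin nq → ℝ) (pS : S1 × S2 × W1 × W2 → ℝ)
    (px1 : Fin nq → S1 → X1 → ℝ) (px2 : Fin nq → S2 → X2 → ℝ)
    (chan : X1 → X2 → Y1 × Y2 → ℝ) :
    Fin nq × (S1 × S2 × W1 × W2) × X1 × X2 × (Y1 × Y2) → ℝ :=
  fun z => pq z.1 * pS z.2.1 * px1 z.1 z.2.1.1 z.2.2.1 * px2 z.1 z.2.1.2.1 z.2.2.2.1 *
    chan z.2.2.1 z.2.2.2.1 z.2.2.2.2

/-!
The code is a random superposition code: a cloud centre is drawn for each block of common-part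
values, which both encoders compute from their own source, and around it channel inputs are drawn
for each source block. A receiver returns any message pair whose likelihood ratio against the
channel output exceeds a threshold `exp (n δ)` for each of four subsets of the pair and its
codeword: all but the first source, all but the second, the cloud centre alone, and nothing.
A wrong pair shares one of these parts with the transmitted one and is otherwise drawn
independently, so a change of measure bounds the expected number of wrong pairs of each type that
pass the test by `exp (-n δ)`. For the transmitted pair the log-likelihood ratio is a sum of i.i.d.
terms whose mean is `I - H`, the gap in the corresponding rate condition; if all four gaps exceed
`δ`, Chernoff's bound shows that the transmitted pair passes the test with high probability.
Averaging over the codebook the sum of both receivers' error probabilities yields one codebook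
that serves both.
-/

section FiniteProbability

variable {Ω α β γ δ : Type} [Fintype Ω] [Fintype β]

theorem prD_nonneg {μ : Ω → ℝ} (hμ : ∀ ω, 0 ≤ μ ω) (X : Ω → α) (a : α) : 0 ≤ prD μ X a :=
  Finset.sum_nonneg fun ω _ => by split_ifs <;> simp [hμ]

theorem le_prD {μ : Ω → ℝ} (hμ : ∀ ω, 0 ≤ μ ω) (X : Ω → α) (ω : Ω) : μ ω ≤ prD μ X (X ω) := by
  have := Finset.single_le_sum (f := fun ω' => if X ω' = X ω then μ ω' else 0)
    (fun ω' _ => by split_ifs <;> simp [hμ]) (Finset.mem_univ ω)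
  simpa [prD] using this

theorem prD_id (μ : Ω → ℝ) : prD μ id = μ := by
  ext ω
  simp [prD]

theorem prD_congr (μ : Ω → ℝ) {X : Ω → α} {Z : Ω → γ} {a : α} {c : γ}
    (h : ∀ ω, X ω = a ↔ Z ω = c) : prD μ X a = prD μ Z c := by
  simp only [prD, h]

theorem prD_comp_equiv (e : β ≃ Ω) (μ : Ω → ℝ) (X : Ω → α) : prD (μ ∘ e) (X ∘ e) = prD μ X :=
  funext fun a => e.sum_comp fun ω => if X ω = a then μ ω else 0

theorem sum_prD_mul [Fintype α] (μ : Ω → ℝ) (X : Ω → α) (F : α → ℝ) :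
    ∑ a, prD μ X a * F a = ∑ ω, μ ω * F (X ω) := by
  simp_rw [prD, Finset.sum_mul]
  rw [Finset.sum_comm]
  simp [ite_mul]

theorem prD_comp (μ : Ω → ℝ) (π : Ω → β) (X : β → α) :
    prD μ (fun ω => X (π ω)) = prD (prD μ π) X := by
  ext a
  have := sum_prD_mul μ π (fun b => if X b = a then 1 else 0)
  simpa [prD] using this.symm

theorem condEnt_comp [Fintype α] [Fintype γ] (μ : Ω → ℝ) (π : Ω → β) (X : β → α) (Y : β → γ) :
    condEnt μ (fun ω => X (π ω)) (fun ω => Y (π ω)) = condEnt (prD μ π) X Y := by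
  simp only [condEnt, ent, prD_comp μ π Y, prD_comp μ π fun b => (X b, Y b)]

theorem condMutInf_comp [Fintype α] [Fintype γ] [Fintype δ] (μ : Ω → ℝ)
    (π : Ω → β) (X : β → α) (Y : β → γ) (Z : β → δ) :
    condMutInf μ (fun ω => X (π ω)) (fun ω => Y (π ω)) (fun ω => Z (π ω)) =
      condMutInf (prD μ π) X Y Z := by
  simp only [condMutInf, ← condEnt_comp]

theorem ent_eq_neg_sum [Fintype α] (μ : Ω → ℝ) (X : Ω → α) :
    ent μ X = -∑ ω, μ ω * Real.log (prD μ X (X ω)) := by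
  rw [ent, sum_prD_mul μ X (fun a => Real.log (prD μ X a))]

theorem IsPmf.nonempty {μ : Ω → ℝ} (hμ : IsPmf μ) : Nonempty Ω := by
  by_contra h
  have := not_nonempty_iff.1 h
  simpa using hμ.2

theorem IsPmf.prD [Fintype α] {μ : Ω → ℝ} (hμ : IsPmf μ) (X : Ω → α) : IsPmf (prD μ X) :=
  ⟨prD_nonneg hμ.1 X, by simpa [hμ.2] using sum_prD_mul μ X 1⟩

theorem sum_mul_le_sum_mul {μ : Ω → ℝ} (hμ : ∀ ω, 0 ≤ μ ω) {f g : Ω → ℝ}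
    (h : ∀ ω, 0 < μ ω → f ω ≤ g ω) : ∑ ω, μ ω * f ω ≤ ∑ ω, μ ω * g ω := by
  refine Finset.sum_le_sum fun ω _ => ?_
  rcases (hμ ω).eq_or_lt with h0 | hpos
  · simp [← h0]
  · exact mul_le_mul_of_nonneg_left (h ω hpos) hpos.le

theorem sum_mul_congr_of_pos {μ : Ω → ℝ} (hμ : ∀ ω, 0 ≤ μ ω) {f g : Ω → ℝ}
    (h : ∀ ω, 0 < μ ω → f ω = g ω) : ∑ ω, μ ω * f ω = ∑ ω, μ ω * g ω :=
  (sum_mul_le_sum_mul hμ fun ω hω => (h ω hω).le).antisymm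
    (sum_mul_le_sum_mul hμ fun ω hω => (h ω hω).ge)

theorem IsPmf.exists_le_sum_mul {μ : Ω → ℝ} (hμ : IsPmf μ) (F : Ω → ℝ) :
    ∃ ω, F ω ≤ ∑ ω, μ ω * F ω := by
  obtain ⟨ω, -, hω⟩ := Finset.exists_min_image Finset.univ F
    (Finset.univ_nonempty_iff.2 hμ.nonempty)
  refine ⟨ω, ?_⟩
  calc F ω = ∑ ω', μ ω' * F ω := by rw [← Finset.sum_mul, hμ.2, one_mul]
    _ ≤ ∑ ω', μ ω' * F ω' :=
      sum_mul_le_sum_mul hμ.1 fun ω' _ => hω ω' (Finset.mem_univ ω')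

/-- The joint pmf of `ω`, drawn from `μ`, and `b`, drawn from the kernel `k` started at `ω`. -/
def compProd (μ : Ω → ℝ) (k : Ω → β → ℝ) : Ω × β → ℝ := fun z => μ z.1 * k z.1 z.2

theorem sum_compProd_mul (μ : Ω → ℝ) (k : Ω → β → ℝ) (F : Ω × β → ℝ) :
    ∑ z, compProd μ k z * F z = ∑ ω, μ ω * ∑ b, k ω b * F (ω, b) := by
  simp_rw [Fintype.sum_prod_type, compProd, Finset.mul_sum, mul_assoc]

theorem IsPmf.compProd {μ : Ω → ℝ} (hμ : IsPmf μ) {k : Ω → β → ℝ} (hk : ∀ ω, IsPmf (k ω)) :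
    IsPmf (compProd μ k) :=
  ⟨fun z => mul_nonneg (hμ.1 _) ((hk _).1 _), by
    simpa [(hk _).2, hμ.2] using sum_compProd_mul μ k 1⟩

theorem prD_compProd_map {μ : Ω → ℝ} {k : Ω → β → ℝ} {F : Ω → γ} {G : β → δ} {κ : γ → δ → ℝ}
    (h : ∀ ω, prD (k ω) G = κ (F ω)) :
    prD (compProd μ k) (Prod.map F G) = fun z => prD μ F z.1 * κ z.1 z.2 := by
  ext ⟨c, d⟩
  simp only [prD, Fintype.sum_prod_type, compProd, Prod.map_apply, Prod.mk.injEq, Finset.sum_mul]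
  refine Finset.sum_congr rfl fun ω _ => ?_
  by_cases hω : F ω = c
  · simp [← hω, ← congr_fun (h ω) d, prD, Finset.mul_sum]
  · simp [hω]

theorem prD_compProd_fst (μ : Ω → ℝ) {k : Ω → β → ℝ} (hk : ∀ ω, ∑ b, k ω b = 1) :
    prD (compProd μ k) Prod.fst = μ := by
  ext ω
  simp [prD, Fintype.sum_prod_type, compProd, ← Finset.mul_sum, hk]

theorem prD_compProd_const_snd {μ : Ω → ℝ} (hμ : ∑ ω, μ ω = 1) (ν : β → ℝ) :
    prD (compProd μ fun _ => ν) Prod.snd = ν := by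
  ext b
  simp [prD, Fintype.sum_prod_type, compProd, ← Finset.sum_mul, hμ]

end FiniteProbability

section IndependentFamily

variable {ι β γ : Type} [Fintype ι]

/-- The pmf of a family of independent letters, the `i`-th one with law `p i`. -/
def piPmf (p : ι → β → ℝ) : (ι → β) → ℝ := fun f => ∏ i, p i (f i)

theorem pos_of_piPmf_pos {p : ι → β → ℝ} (hp : ∀ i b, 0 ≤ p i b) {f : ι → β} (hf : 0 < piPmf p f)
    (i : ι) : 0 < p i (f i) :=
  (hp i _).lt_of_ne' (Finset.prod_ne_zero_iff.1 hf.ne' i (Finset.mem_univ i))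

variable [DecidableEq ι] [Fintype β]

theorem IsPmf.piPmf {p : ι → β → ℝ} (hp : ∀ i, IsPmf (p i)) : IsPmf (piPmf p) :=
  ⟨fun f => Finset.prod_nonneg fun i _ => (hp i).1 (f i), by
    simp [_root_.piPmf, ← Fintype.prod_sum, (hp _).2]⟩

theorem sum_ite_forall_piPmf (p : ι → β → ℝ) (C : ι → β → Prop) :
    ∑ f, (if ∀ i, C i (f i) then piPmf p f else 0) = ∏ i, ∑ b, if C i b then p i b else 0 := by
  simp [Fintype.prod_sum, piPmf, Finset.prod_ite_zero]

theorem prD_piPmf_comp (p : ι → β → ℝ) (K : ι → β → γ) :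
    prD (piPmf p) (fun f i => K i (f i)) = piPmf fun i => prD (p i) (K i) := by
  ext c
  simpa [funext_iff, prD, piPmf] using sum_ite_forall_piPmf p fun i b => K i b = c i

/-- The law of `b'` given `b` when `b'` is a copy of `b` if `same`, and an independent draw from
`p` otherwise. -/
def copyOrDraw (same : Prop) (p : β → ℝ) (b b' : β) : ℝ :=
  if same then if b' = b then 1 else 0 else p b'

theorem prD_piPmf_pair {p : ι → β → ℝ} (hp : ∀ i, ∑ b, p i b = 1) (i j : ι) (b b' : β) :
    prD (piPmf p) (fun f => (f i, f j)) (b, b') = p i b * copyOrDraw (i = j) (p j) b b' := by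
  have hprod := sum_ite_forall_piPmf p fun k c => (k = i → c = b) ∧ (k = j → c = b')
  simp only [forall_and, forall_eq] at hprod
  simp only [prD, Prod.mk.injEq, hprod, copyOrDraw]
  by_cases hij : i = j
  · subst hij
    rw [Fintype.prod_eq_single i fun k hk => by simp [hk, hp]]
    by_cases hb : b' = b
    · simp [hb]
    · have hne : ∀ c, ¬(c = b ∧ c = b') := fun c hc => hb (hc.2.symm.trans hc.1)
      simp [hb, hne]
  · rw [Fintype.prod_eq_mul i j hij fun k hk => by simp [hk.1, hk.2, hp]]
    simp [hij, Ne.symm hij]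

end IndependentFamily

section Chernoff

variable {Ω : Type} [Fintype Ω]

theorem exists_sum_mul_exp_lt_one {μ : Ω → ℝ} (hμ : ∑ ω, μ ω = 1) (g : Ω → ℝ)
    (hg : 0 < ∑ ω, μ ω * g ω) : ∃ t : ℝ, 0 < t ∧ ∑ ω, μ ω * Real.exp (-(t * g ω)) < 1 := by
  have hderiv : HasDerivAt (fun t : ℝ => ∑ ω, μ ω * Real.exp (-(t * g ω)))
      (∑ ω, μ ω * (Real.exp (-(0 * g ω)) * (-(1 * g ω)))) 0 :=
    HasDerivAt.fun_sum fun ω _ =>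
      (((hasDerivAt_id (0 : ℝ)).mul_const (g ω)).neg.exp).const_mul (μ ω)
  have hslope := (hasDerivAt_iff_tendsto_slope.1 hderiv).eventually
    (gt_mem_nhds (show _ < (0 : ℝ) by simpa using hg))
  obtain ⟨t, ht, ht0 : 0 < t⟩ := ((hslope.filter_mono
    (nhdsWithin_mono 0 fun x (hx : x ∈ Set.Ioi 0) => ne_of_gt hx)).and self_mem_nhdsWithin).exists
  refine ⟨t, ht0, ?_⟩
  rw [slope_def_field, sub_zero, div_lt_iff₀ ht0] at ht
  simpa [hμ] using ht

theorem exists_lowerTail_le_pow {μ : Ω → ℝ} (hμ : IsPmf μ) (g : Ω → ℝ) {δ : ℝ}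
    (hδ : δ < ∑ ω, μ ω * g ω) :
    ∃ ρ : ℝ, 0 ≤ ρ ∧ ρ < 1 ∧ ∀ n : ℕ, ∑ z : Fin n → Ω,
      piPmf (fun _ => μ) z * (if ∑ i, g (z i) < n * δ then 1 else 0) ≤ ρ ^ n := by
  obtain ⟨t, ht, hlt⟩ := exists_sum_mul_exp_lt_one hμ.2 (fun ω => g ω - δ) (by
    simpa [mul_sub, Finset.sum_sub_distrib, ← Finset.sum_mul, hμ.2] using hδ)
  refine ⟨_, Finset.sum_nonneg fun ω _ => mul_nonneg (hμ.1 ω) (Real.exp_pos _).le, hlt,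
    fun n => ?_⟩
  have hpow := Fintype.prod_sum (ι := Fin n) fun _ ω => μ ω * Real.exp (-(t * (g ω - δ)))
  rw [Finset.prod_const, Finset.card_univ, Fintype.card_fin] at hpow
  rw [hpow]
  refine Finset.sum_le_sum fun z _ => ?_
  rw [Finset.prod_mul_distrib, ← Real.exp_sum]
  refine mul_le_mul_of_nonneg_left ?_ (Finset.prod_nonneg fun i _ => hμ.1 _)
  split_ifs with h
  · refine Real.one_le_exp ?_
    simp only [Finset.sum_neg_distrib, ← Finset.mul_sum, Finset.sum_sub_distrib, Finset.sum_const,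
      Finset.card_univ, Fintype.card_fin, nsmul_eq_mul]
    nlinarith
  · exact (Real.exp_pos _).le

end Chernoff

section ThresholdDecoding

variable {Θ W T Y E C : Type}

/-- The error probability of the encoder `x` and the decoder `g`. -/
def errorProb [Fintype Θ] [Fintype W] [Fintype Y] (src : Θ × W → ℝ) (chan : T → Y → ℝ)
    (x : Θ → T) (g : Y → W → Θ) : ℝ :=
  ∑ r, src r * ∑ y, chan (x r.1) y * if g y r.2 = r.1 then 0 else 1

theorem errorProb_nonneg [Fintype Θ] [Fintype W] [Fintype Y] {src : Θ × W → ℝ} {chan : T → Y → ℝ}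
    (hsrc : ∀ r, 0 ≤ src r) (hchan : ∀ t y, 0 ≤ chan t y) (x : Θ → T) (g : Y → W → Θ) :
    0 ≤ errorProb src chan x g :=
  Finset.sum_nonneg fun r _ => mul_nonneg (hsrc r) (Finset.sum_nonneg fun y _ =>
    mul_nonneg (hchan _ y) (by split_ifs <;> simp))

/-- The decoder that returns some message whose codeword passes the test `pass`. -/
def testDecoder [Nonempty Θ] (pass : ((Θ × W) × T) × Y → Prop) (x : Θ → T) (y : Y) (w : W) : Θ :=
  Classical.epsilon fun θ => pass (((θ, w), x θ), y)

theorem testDecoder_error_le [Fintype Θ] [Nonempty Θ] (pass : ((Θ × W) × T) × Y → Prop)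
    (x : Θ → T) (θ : Θ) (w : W) (y : Y) :
    (if testDecoder pass x y w = θ then 0 else 1 : ℝ) ≤
      (if pass (((θ, w), x θ), y) then 0 else 1) +
        ∑ θ', if θ' ≠ θ ∧ pass (((θ', w), x θ'), y) then 1 else 0 := by
  have hsum : ∀ θ', 0 ≤ if θ' ≠ θ ∧ pass (((θ', w), x θ'), y) then (1 : ℝ) else 0 :=
    fun θ' => by split_ifs <;> simp
  by_cases hdec : testDecoder pass x y w = θ
  · rw [if_pos hdec]
    exact add_nonneg (by split_ifs <;> simp) (Finset.sum_nonneg fun θ' _ => hsum θ')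
  by_cases hθ : pass (((θ, w), x θ), y)
  · have hspec := Classical.epsilon_spec (p := fun θ' => pass (((θ', w), x θ'), y)) ⟨θ, hθ⟩
    have := Finset.single_le_sum (fun θ' _ => hsum θ')
      (Finset.mem_univ (testDecoder pass x y w))
    rw [if_pos ⟨hdec, hspec⟩] at this
    simpa [hdec, hθ] using this
  · rw [if_neg hdec, if_neg hθ]
    exact le_add_of_nonneg_right (Finset.sum_nonneg fun θ' _ => hsum θ')

/-- The joint law of a message with its side information (drawn from `src`), its codeword (drawn
from `gen`) and the channel output. -/
def jointLaw (src : Θ × W → ℝ) (gen : Θ → T → ℝ) (chan : T → Y → ℝ) : ((Θ × W) × T) × Y → ℝ :=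
  compProd (compProd src fun r => gen r.1) fun v => chan v.2

variable [Fintype T]

theorem IsPmf.jointLaw [Fintype Θ] [Fintype W] [Fintype Y] {src : Θ × W → ℝ}
    {gen : Θ → T → ℝ} {chan : T → Y → ℝ} (hsrc : IsPmf src) (hgen : ∀ θ, IsPmf (gen θ))
    (hchan : ∀ t, IsPmf (chan t)) : IsPmf (jointLaw src gen chan) :=
  (hsrc.compProd fun r => hgen r.1).compProd fun v => hchan v.2

theorem sum_jointLaw_mul [Fintype Θ] [Fintype W] [Fintype Y] (src : Θ × W → ℝ)
    (gen : Θ → T → ℝ) (chan : T → Y → ℝ) (F : ((Θ × W) × T) × Y → ℝ) :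
    ∑ z, jointLaw src gen chan z * F z =
      ∑ r, src r * ∑ y, ∑ t, gen r.1 t * (chan t y * F ((r, t), y)) := by
  rw [jointLaw, sum_compProd_mul, sum_compProd_mul]
  refine Finset.sum_congr rfl fun r _ => ?_
  simp_rw [Finset.mul_sum]
  rw [Finset.sum_comm]

/-- A part `(msg θ, word t)` of a message-codeword pair that a competitor may share with the
transmitted pair: `gen` first draws the shared word from `law`, and then the codeword with
conditional probability `rest`. -/
structure SharedPart (gen : Θ → T → ℝ) where
  Msg : Type
  Word : Type
  msg : Θ → Msg
  word : T → Word
  law : Msg → Word → ℝ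
  rest : Θ → T → ℝ
  rest_nonneg : ∀ θ t, 0 ≤ rest θ t
  law_mul_rest : ∀ θ t, law (msg θ) (word t) * rest θ t = gen θ t
  prD_word : ∀ θ, prD (gen θ) word = law (msg θ)

namespace SharedPart

variable {gen : Θ → T → ℝ} (P : SharedPart gen) (src : Θ × W → ℝ) (chan : T → Y → ℝ)

/-- What is seen of an outcome when only the shared part, the side information and the channel
output are visible. -/
def view : ((Θ × W) × T) × Y → ((P.Msg × W) × P.Word) × Y :=
  Prod.map (Prod.map (Prod.map P.msg id) P.word) id

/-- The joint law of message, side information, shared word and channel output, when the channel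
is fed with the whole codeword. -/
def density (z : ((Θ × W) × T) × Y) : ℝ :=
  src z.1.1 * P.law (P.msg z.1.1.1) (P.word z.1.2) * chan z.1.2 z.2

/-- The law of the competitor's codeword `t'` of `θ'` given the codeword `t` of `θ`, when they
share the part `P` and nothing else. It vanishes if the messages differ in that part. -/
def competitorLaw (θ : Θ) (t : T) (θ' : Θ) (t' : T) : ℝ :=
  if P.msg θ' = P.msg θ ∧ P.word t' = P.word t then P.rest θ' t' else 0

theorem competitorLaw_nonneg (θ : Θ) (t : T) (θ' : Θ) (t' : T) :
    0 ≤ P.competitorLaw θ t θ' t' := by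
  rw [competitorLaw]
  split_ifs <;> simp [P.rest_nonneg]

theorem rest_mul_density (z : ((Θ × W) × T) × Y) :
    P.rest z.1.1.1 z.1.2 * P.density src chan z = jointLaw src gen chan z := by
  rw [density, jointLaw, compProd, compProd, ← P.law_mul_rest]
  ring

variable [Fintype Θ]

/-- The expected number of competitors of an outcome that share the part `P` with it and pass
the test. -/
def confusionWeight (pass : ((Θ × W) × T) × Y → Prop) (z : ((Θ × W) × T) × Y) : ℝ :=
  ∑ θ', ∑ t', if pass (((θ', z.1.1.2), t'), z.2) then P.competitorLaw z.1.1.1 z.1.2 θ' t' else 0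

variable [Fintype W] [Fintype Y]

/-- The logarithm of the likelihood ratio tested by the threshold decoder. -/
def logRatio (z : ((Θ × W) × T) × Y) : ℝ :=
  Real.log (P.density src chan z) - Real.log (prD (jointLaw src gen chan) P.view (P.view z))

theorem confusionWeight_eq_sum_view (pass : ((Θ × W) × T) × Y → Prop) (z : ((Θ × W) × T) × Y) :
    P.confusionWeight pass z =
      ∑ z', if P.view z' = P.view z ∧ pass z' then P.rest z'.1.1.1 z'.1.2 else 0 := by
  obtain ⟨⟨⟨θ, w⟩, t⟩, y⟩ := z
  simp only [confusionWeight, competitorLaw, Fintype.sum_prod_type, view, Prod.map_apply, id,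
    Prod.mk.injEq]
  refine Finset.sum_congr rfl fun θ' _ => ?_
  rw [Finset.sum_eq_single w (fun w' _ hw => by simp [hw]) (by simp)]
  refine Finset.sum_congr rfl fun t' _ => ?_
  rw [Finset.sum_eq_single y (fun y' _ hy => by simp [hy]) (by simp)]
  simp [← ite_and, and_comm]

variable {src chan}

theorem sum_jointLaw_mul_confusionWeight_le (hJ : IsPmf (jointLaw src gen chan))
    {pass : ((Θ × W) × T) × Y → Prop} {c : ℝ} (hc : 0 < c)
    (hpass : ∀ z, pass z →
      c * prD (jointLaw src gen chan) P.view (P.view z) ≤ P.density src chan z) :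
    ∑ z, jointLaw src gen chan z * P.confusionWeight pass z ≤ 1 / c := by
  calc ∑ z, jointLaw src gen chan z * P.confusionWeight pass z
      = ∑ z', if pass z' then
          P.rest z'.1.1.1 z'.1.2 * prD (jointLaw src gen chan) P.view (P.view z') else 0 := by
        simp_rw [confusionWeight_eq_sum_view, Finset.mul_sum]
        rw [Finset.sum_comm]
        refine Finset.sum_congr rfl fun z' _ => ?_
        by_cases h : pass z'
        · simp [h, prD, Finset.mul_sum, mul_comm, eq_comm]
        · simp [h]
    _ ≤ ∑ z', jointLaw src gen chan z' / c := by
        refine Finset.sum_le_sum fun z' _ => ?_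
        split_ifs with h
        · rw [← P.rest_mul_density, mul_div_assoc]
          refine mul_le_mul_of_nonneg_left ?_ (P.rest_nonneg _ _)
          rw [le_div_iff₀ hc, mul_comm]
          exact hpass z' h
        · exact div_nonneg (hJ.1 z') hc.le
    _ = 1 / c := by rw [← Finset.sum_div, hJ.2]

end SharedPart

/-- The test of the threshold decoder: the message is `valid` and all likelihood ratios are at
least `c`. -/
def Passes [Fintype Θ] [Fintype W] [Fintype Y] {gen : Θ → T → ℝ} (src : Θ × W → ℝ)
    (chan : T → Y → ℝ) (valid : Set Θ) (P : E → SharedPart gen) (c : ℝ)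
    (z : ((Θ × W) × T) × Y) : Prop :=
  z.1.1.1 ∈ valid ∧ ∀ e,
    c * prD (jointLaw src gen chan) (P e).view ((P e).view z) ≤ (P e).density src chan z

/-- A random codebook with law `γ` whose codewords have the law `gen`, and in which the codeword
of a competitor shares with the transmitted one one of the parts `P e` and is otherwise drawn
independently. -/
structure IsRandomCode [Fintype C] {gen : Θ → T → ℝ} (γ : C → ℝ) (enc : C → Θ → T)
    (valid : Set Θ) (P : E → SharedPart gen) : Prop where
  isPmf : IsPmf γ
  prD_enc : ∀ θ ∈ valid, prD γ (fun k => enc k θ) = gen θ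
  prD_enc_pair : ∀ θ ∈ valid, ∀ θ' ∈ valid, θ' ≠ θ → ∃ e, ∀ t t',
    prD γ (fun k => (enc k θ, enc k θ')) (t, t') = gen θ t * (P e).competitorLaw θ t θ' t'

namespace IsRandomCode

variable [Fintype C] [Fintype E] {gen : Θ → T → ℝ} {γ : C → ℝ} {enc : C → Θ → T} {valid : Set Θ}
  {P : E → SharedPart gen}

theorem sum_competitor_le (hγ : IsRandomCode γ enc valid P) (hgen : ∀ θ, IsPmf (gen θ))
    {pass : ((Θ × W) × T) × Y → Prop} (hpass : ∀ z, pass z → z.1.1.1 ∈ valid)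
    {f : T → ℝ} (hf : ∀ t, 0 ≤ f t) {θ : Θ} (hθ : θ ∈ valid) (θ' : Θ) (w : W) (y : Y) :
    ∑ k, γ k * (f (enc k θ) * if θ' ≠ θ ∧ pass (((θ', w), enc k θ'), y) then 1 else 0) ≤
      ∑ t, gen θ t * (f t * ∑ e, ∑ t',
        if pass (((θ', w), t'), y) then (P e).competitorLaw θ t θ' t' else 0) := by
  have hsum : ∀ e t, 0 ≤ ∑ t', if pass (((θ', w), t'), y) then
      (P e).competitorLaw θ t θ' t' else 0 := fun e t =>
    Finset.sum_nonneg fun t' _ => by split_ifs <;> simp [(P e).competitorLaw_nonneg]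
  by_cases h : θ' ≠ θ ∧ θ' ∈ valid
  · obtain ⟨e, he⟩ := hγ.prD_enc_pair θ hθ θ' h.2 h.1
    rw [← sum_prD_mul γ (fun k => (enc k θ, enc k θ'))
      fun p => f p.1 * if θ' ≠ θ ∧ pass (((θ', w), p.2), y) then 1 else 0, Fintype.sum_prod_type]
    refine Finset.sum_le_sum fun t _ => ?_
    calc _ = gen θ t * (f t * ∑ t',
          if pass (((θ', w), t'), y) then (P e).competitorLaw θ t θ' t' else 0) := by
          simp_rw [he, Finset.mul_sum]
          refine Finset.sum_congr rfl fun t' _ => ?_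
          simp only [h.1, ne_eq, not_false_eq_true, true_and]
          split_ifs <;> ring
      _ ≤ _ := mul_le_mul_of_nonneg_left (mul_le_mul_of_nonneg_left
          (Finset.single_le_sum (fun e _ => hsum e t) (Finset.mem_univ e)) (hf t)) ((hgen θ).1 t)
  · have hno : ∀ k, ¬(θ' ≠ θ ∧ pass (((θ', w), enc k θ'), y)) := fun k hk =>
      h ⟨hk.1, hpass _ hk.2⟩
    simp only [hno, if_false, mul_zero, Finset.sum_const_zero]
    exact Finset.sum_nonneg fun t _ => mul_nonneg ((hgen θ).1 t)
      (mul_nonneg (hf t) (Finset.sum_nonneg fun e _ => hsum e t))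

variable [Fintype Θ] [Nonempty Θ]

theorem sum_mul_error_le (hγ : IsRandomCode γ enc valid P) (hgen : ∀ θ, IsPmf (gen θ))
    {pass : ((Θ × W) × T) × Y → Prop} (hpass : ∀ z, pass z → z.1.1.1 ∈ valid)
    {f : T → ℝ} (hf : ∀ t, 0 ≤ f t) {θ : Θ} (hθ : θ ∈ valid) (w : W) (y : Y) :
    ∑ k, γ k * (f (enc k θ) * if testDecoder pass (enc k) y w = θ then 0 else 1) ≤
      ∑ t, gen θ t * (f t * ((if pass (((θ, w), t), y) then 0 else 1) +
        ∑ e, (P e).confusionWeight pass (((θ, w), t), y))) := by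
  calc ∑ k, γ k * (f (enc k θ) * if testDecoder pass (enc k) y w = θ then 0 else 1)
      ≤ ∑ k, γ k * (f (enc k θ) * ((if pass (((θ, w), enc k θ), y) then 0 else 1) +
          ∑ θ', if θ' ≠ θ ∧ pass (((θ', w), enc k θ'), y) then 1 else 0)) :=
        sum_mul_le_sum_mul hγ.isPmf.1 fun k _ => mul_le_mul_of_nonneg_left
          (testDecoder_error_le pass (enc k) θ w y) (hf _)
    _ = ∑ t, gen θ t * (f t * if pass (((θ, w), t), y) then 0 else 1) +
        ∑ θ', ∑ k, γ k *
          (f (enc k θ) * if θ' ≠ θ ∧ pass (((θ', w), enc k θ'), y) then 1 else 0) := by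
        rw [← hγ.prD_enc θ hθ, sum_prD_mul γ (fun k => enc k θ), Finset.sum_comm]
        simp only [mul_add, Finset.sum_add_distrib, Finset.mul_sum]
    _ ≤ ∑ t, gen θ t * (f t * if pass (((θ, w), t), y) then 0 else 1) +
        ∑ θ', ∑ t, gen θ t * (f t * ∑ e, ∑ t',
          if pass (((θ', w), t'), y) then (P e).competitorLaw θ t θ' t' else 0) := by
        gcongr with θ' _
        exact hγ.sum_competitor_le hgen hpass hf hθ θ' w y
    _ = _ := by
        rw [Finset.sum_comm]
        simp only [SharedPart.confusionWeight, mul_add, Finset.sum_add_distrib,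
          ← Finset.mul_sum]
        simp only [Finset.sum_comm (s := (Finset.univ : Finset E)) (t := (Finset.univ : Finset Θ))]

theorem sum_mul_errorProb_le [Fintype W] [Fintype Y] (hγ : IsRandomCode γ enc valid P)
    {src : Θ × W → ℝ} (hsrc : IsPmf src) (hgen : ∀ θ, IsPmf (gen θ)) {chan : T → Y → ℝ}
    (hchan : ∀ t, IsPmf (chan t)) (hvalid : ∀ r, 0 < src r → r.1 ∈ valid) {c : ℝ} (hc : 0 < c) :
    ∑ k, γ k * errorProb src chan (enc k) (testDecoder (Passes src chan valid P c) (enc k)) ≤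
      ∑ z, jointLaw src gen chan z * (if Passes src chan valid P c z then 0 else 1) +
        Fintype.card E / c := by
  set pass := Passes src chan valid P c
  have hJ := hsrc.jointLaw hgen hchan
  calc ∑ k, γ k * errorProb src chan (enc k) (testDecoder pass (enc k))
      = ∑ r, src r * ∑ y, ∑ k, γ k * (chan (enc k r.1) y *
          if testDecoder pass (enc k) y r.2 = r.1 then 0 else 1) := by
        simp_rw [errorProb, Finset.mul_sum]
        rw [Finset.sum_comm]
        refine Finset.sum_congr rfl fun r _ => ?_
        rw [Finset.sum_comm]
        simp only [mul_left_comm]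
    _ ≤ ∑ r, src r * ∑ y, ∑ t, gen r.1 t * (chan t y * ((if pass ((r, t), y) then 0 else 1) +
          ∑ e, (P e).confusionWeight pass ((r, t), y))) :=
        sum_mul_le_sum_mul hsrc.1 fun r hr => Finset.sum_le_sum fun y _ =>
          hγ.sum_mul_error_le hgen (fun z hz => hz.1) (fun t => (hchan t).1 y) (hvalid r hr) r.2 y
    _ = ∑ z, jointLaw src gen chan z * (if pass z then 0 else 1) +
        ∑ e, ∑ z, jointLaw src gen chan z * (P e).confusionWeight pass z := by
        rw [← sum_jointLaw_mul src gen chan fun z => (if pass z then 0 else 1) +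
          ∑ e, (P e).confusionWeight pass z, Finset.sum_comm]
        simp only [mul_add, Finset.sum_add_distrib, Finset.mul_sum]
    _ ≤ ∑ z, jointLaw src gen chan z * (if pass z then 0 else 1) + ∑ _e : E, 1 / c := by
        gcongr with e
        exact (P e).sum_jointLaw_mul_confusionWeight_le hJ hc fun z hz => hz.2 e
    _ = _ := by simp [div_eq_mul_inv]

end IsRandomCode

end ThresholdDecoding

section Superposition

/-- A superposition random code for the sources `S1` and `S2`: a cloud centre is drawn for each
value of the common part of the sources, which `common1` and `common2` compute from either source,
and around it the channel inputs are drawn for each source symbol. -/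
structure SuperpositionScheme (S1 S2 U Q X1 X2 : Type) [Fintype Q] [Fintype X1] [Fintype X2] where
  common1 : S1 → U
  common2 : S2 → U
  cloudLaw : Q → ℝ
  inputLaw1 : Q → S1 → X1 → ℝ
  inputLaw2 : Q → S2 → X2 → ℝ
  cloudLaw_isPmf : IsPmf cloudLaw
  inputLaw1_isPmf : ∀ q s, IsPmf (inputLaw1 q s)
  inputLaw2_isPmf : ∀ q s, IsPmf (inputLaw2 q s)

/-- The types of decoding errors, according to what the competitor shares with the transmitted
pair: the second source and its codeword, the first source and its codeword, the cloud centre, or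
nothing. -/
inductive ErrorEvent
  | first
  | second
  | sameCloud
  | total

instance : Fintype ErrorEvent :=
  ⟨{.first, .second, .sameCloud, .total}, fun e => by cases e <;> simp⟩

namespace SuperpositionScheme

variable {S1 S2 U Q X1 X2 : Type} [Fintype Q] [Fintype X1] [Fintype X2]
  (M : SuperpositionScheme S1 S2 U Q X1 X2)

/-- The law of the cloud centre and the channel inputs of a pair of source symbols. -/
def wordLaw (θ : S1 × S2) : Q × X1 × X2 → ℝ :=
  compProd M.cloudLaw fun q => compProd (M.inputLaw1 q θ.1) fun _ => M.inputLaw2 q θ.2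

theorem wordLaw_isPmf (θ : S1 × S2) : IsPmf (M.wordLaw θ) :=
  M.cloudLaw_isPmf.compProd fun q =>
    (M.inputLaw1_isPmf q θ.1).compProd fun _ => M.inputLaw2_isPmf q θ.2

/-- The pairs of source symbols whose common parts agree. -/
def consistent : Set (S1 × S2) := {θ | M.common1 θ.1 = M.common2 θ.2}

/-- The cloud centre and the channel inputs of a pair of source symbols under the codebook `k`. -/
def encode (k : (U → Q) × (S1 → X1) × (S2 → X2)) (θ : S1 × S2) : Q × X1 × X2 :=
  (k.1 (M.common1 θ.1), k.2.1 θ.1, k.2.2 θ.2)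

/-- The part shared with the transmitted pair by the competitors of an error event. -/
def sharedPart : ErrorEvent → SharedPart M.wordLaw
  | .first =>
    { Msg := S2
      Word := Q × X2
      msg := Prod.snd
      word := Prod.map id Prod.snd
      law := fun s => compProd M.cloudLaw fun q => M.inputLaw2 q s
      rest := fun θ t => M.inputLaw1 t.1 θ.1 t.2.1
      rest_nonneg := fun θ t => (M.inputLaw1_isPmf _ _).1 _
      law_mul_rest := fun θ t => by simp only [compProd, wordLaw, Prod.map, id]; ring
      prD_word := fun θ => by
        rw [wordLaw, prD_compProd_map (F := id) (κ := fun q => M.inputLaw2 q θ.2) fun q =>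
          prD_compProd_const_snd (M.inputLaw1_isPmf q θ.1).2 (M.inputLaw2 q θ.2), prD_id]
        rfl }
  | .second =>
    { Msg := S1
      Word := Q × X1
      msg := Prod.fst
      word := Prod.map id Prod.fst
      law := fun s => compProd M.cloudLaw fun q => M.inputLaw1 q s
      rest := fun θ t => M.inputLaw2 t.1 θ.2 t.2.2
      rest_nonneg := fun θ t => (M.inputLaw2_isPmf _ _).1 _
      law_mul_rest := fun θ t => mul_assoc _ _ _
      prD_word := fun θ => by
        rw [wordLaw, prD_compProd_map (F := id) (κ := fun q => M.inputLaw1 q θ.1) fun q =>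
          prD_compProd_fst (M.inputLaw1 q θ.1) fun _ => (M.inputLaw2_isPmf q θ.2).2, prD_id]
        rfl }
  | .sameCloud =>
    { Msg := U
      Word := Q
      msg := fun θ => M.common1 θ.1
      word := Prod.fst
      law := fun _ => M.cloudLaw
      rest := fun θ t => M.inputLaw1 t.1 θ.1 t.2.1 * M.inputLaw2 t.1 θ.2 t.2.2
      rest_nonneg := fun θ t =>
        mul_nonneg ((M.inputLaw1_isPmf _ _).1 _) ((M.inputLaw2_isPmf _ _).1 _)
      law_mul_rest := fun θ t => rfl
      prD_word := fun θ => prD_compProd_fst M.cloudLaw fun q =>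
        ((M.inputLaw1_isPmf q θ.1).compProd fun _ => M.inputLaw2_isPmf q θ.2).2 }
  | .total =>
    { Msg := Unit
      Word := Unit
      msg := fun _ => ()
      word := fun _ => ()
      law := fun _ _ => 1
      rest := M.wordLaw
      rest_nonneg := fun θ => (M.wordLaw_isPmf θ).1
      law_mul_rest := fun θ t => one_mul _
      prD_word := fun θ => by
        ext
        simpa [prD] using (M.wordLaw_isPmf θ).2 }

theorem exists_competitorLaw_eq {θ θ' : S1 × S2} (hθ : θ ∈ M.consistent) (hθ' : θ' ∈ M.consistent)
    (hne : θ' ≠ θ) : ∃ e, ∀ t t',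
      copyOrDraw (M.common1 θ.1 = M.common1 θ'.1) M.cloudLaw t.1 t'.1 *
        (copyOrDraw (θ.1 = θ'.1) (M.inputLaw1 t'.1 θ'.1) t.2.1 t'.2.1 *
          copyOrDraw (θ.2 = θ'.2) (M.inputLaw2 t'.1 θ'.2) t.2.2 t'.2.2) =
        (M.sharedPart e).competitorLaw θ t θ' t' := by
  by_cases h1 : θ.1 = θ'.1
  · have h2 : θ.2 ≠ θ'.2 := fun h2 => hne (Prod.ext h1.symm h2.symm)
    refine ⟨.second, fun t t' => ?_⟩
    by_cases hq : t'.1 = t.1 <;> by_cases hx : t'.2.1 = t.2.1 <;>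
    simp [SharedPart.competitorLaw, sharedPart, copyOrDraw, Prod.ext_iff, h1, h2, hq, hx]
  by_cases h2 : θ.2 = θ'.2
  · have hcommon : M.common1 θ.1 = M.common1 θ'.1 := by rw [hθ, h2, hθ']
    refine ⟨.first, fun t t' => ?_⟩
    by_cases hq : t'.1 = t.1 <;> by_cases hx : t'.2.2 = t.2.2 <;>
    simp [SharedPart.competitorLaw, sharedPart, copyOrDraw, Prod.ext_iff, h1, h2, hcommon, hq, hx]
  by_cases hcommon : M.common1 θ.1 = M.common1 θ'.1
  · refine ⟨.sameCloud, fun t t' => ?_⟩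
    simp [SharedPart.competitorLaw, sharedPart, copyOrDraw, h1, h2, hcommon]
  · refine ⟨.total, fun t t' => ?_⟩
    simp [SharedPart.competitorLaw, sharedPart, copyOrDraw, h1, h2, hcommon, wordLaw, compProd]

variable [Fintype S1] [Fintype S2] [Fintype U] [DecidableEq S1] [DecidableEq S2] [DecidableEq U]

/-- The law of the random codebook of cloud centres and channel inputs. -/
def codebookLaw : (U → Q) × (S1 → X1) × (S2 → X2) → ℝ :=
  compProd (piPmf fun _ => M.cloudLaw) fun a =>
    compProd (piPmf fun s => M.inputLaw1 (a (M.common1 s)) s) fun _ =>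
      piPmf fun s => M.inputLaw2 (a (M.common2 s)) s

theorem codebookLaw_isPmf : IsPmf M.codebookLaw :=
  (IsPmf.piPmf fun _ => M.cloudLaw_isPmf).compProd fun _ =>
    (IsPmf.piPmf fun s => M.inputLaw1_isPmf _ s).compProd fun _ =>
      IsPmf.piPmf fun s => M.inputLaw2_isPmf _ s

theorem prD_encode_pair {θ θ' : S1 × S2} (hθ : θ ∈ M.consistent) (hθ' : θ' ∈ M.consistent)
    (t t' : Q × X1 × X2) :
    prD M.codebookLaw (fun k => (M.encode k θ, M.encode k θ')) (t, t') =
      M.wordLaw θ t * (copyOrDraw (M.common1 θ.1 = M.common1 θ'.1) M.cloudLaw t.1 t'.1 *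
        (copyOrDraw (θ.1 = θ'.1) (M.inputLaw1 t'.1 θ'.1) t.2.1 t'.2.1 *
          copyOrDraw (θ.2 = θ'.2) (M.inputLaw2 t'.1 θ'.2) t.2.2 t'.2.2)) := by
  have hinputs : ∀ a : U → Q,
      prD (compProd (piPmf fun s => M.inputLaw1 (a (M.common1 s)) s) fun _ =>
          piPmf fun s => M.inputLaw2 (a (M.common2 s)) s)
        (Prod.map (fun b => (b θ.1, b θ'.1)) fun d => (d θ.2, d θ'.2)) =
      fun p => (M.inputLaw1 (a (M.common1 θ.1)) θ.1 p.1.1 *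
          copyOrDraw (θ.1 = θ'.1) (M.inputLaw1 (a (M.common1 θ'.1)) θ'.1) p.1.1 p.1.2) *
        (M.inputLaw2 (a (M.common1 θ.1)) θ.2 p.2.1 *
          copyOrDraw (θ.2 = θ'.2) (M.inputLaw2 (a (M.common1 θ'.1)) θ'.2) p.2.1 p.2.2) := by
    intro a
    rw [prD_compProd_map (κ := fun _ => prD (piPmf fun s => M.inputLaw2 (a (M.common2 s)) s)
      fun d => (d θ.2, d θ'.2)) fun _ => rfl]
    ext ⟨⟨x1, x1'⟩, x2, x2'⟩
    rw [prD_piPmf_pair fun s => (M.inputLaw1_isPmf _ s).2,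
      prD_piPmf_pair fun s => (M.inputLaw2_isPmf _ s).2, ← hθ, ← hθ']
  have hpairs := congr_fun (prD_compProd_map (μ := piPmf fun _ : U => M.cloudLaw)
    (F := fun a => (a (M.common1 θ.1), a (M.common1 θ'.1)))
    (κ := fun q p => (M.inputLaw1 q.1 θ.1 p.1.1 *
        copyOrDraw (θ.1 = θ'.1) (M.inputLaw1 q.2 θ'.1) p.1.1 p.1.2) *
      (M.inputLaw2 q.1 θ.2 p.2.1 *
        copyOrDraw (θ.2 = θ'.2) (M.inputLaw2 q.2 θ'.2) p.2.1 p.2.2)) hinputs)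
    ((t.1, t'.1), (t.2.1, t'.2.1), t.2.2, t'.2.2)
  rw [prD_piPmf_pair fun _ => M.cloudLaw_isPmf.2] at hpairs
  calc _ = _ := prD_congr _ fun k => by
        simp only [encode, Prod.map, Prod.ext_iff]
        tauto
    _ = _ := hpairs
    _ = _ := by simp only [wordLaw, compProd]; ring

theorem prD_encode {θ : S1 × S2} (hθ : θ ∈ M.consistent) :
    prD M.codebookLaw (fun k => M.encode k θ) = M.wordLaw θ := by
  ext t
  calc _ = prD M.codebookLaw (fun k => (M.encode k θ, M.encode k θ)) (t, t) :=
        prD_congr _ fun k => by simp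
    _ = _ := by simp [M.prD_encode_pair hθ hθ, copyOrDraw]

theorem isRandomCode : IsRandomCode M.codebookLaw M.encode M.consistent M.sharedPart where
  isPmf := M.codebookLaw_isPmf
  prD_enc θ hθ := M.prD_encode hθ
  prD_enc_pair θ hθ θ' hθ' hne := by
    obtain ⟨e, he⟩ := M.exists_competitorLaw_eq hθ hθ' hne
    exact ⟨e, fun t t' => by rw [M.prD_encode_pair hθ hθ', he]⟩

end SuperpositionScheme

end Superposition

section BlockCode

variable {ι S1 S2 W U Q X1 X2 Y : Type} [Fintype ι]

/-- A block of source symbols with its side information, as a sequence of letters. -/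
def sourceLetters : ((ι → S1) × (ι → S2)) × (ι → W) ≃ (ι → (S1 × S2) × W) where
  toFun r i := ((r.1.1 i, r.1.2 i), r.2 i)
  invFun f := ((fun i => (f i).1.1, fun i => (f i).1.2), fun i => (f i).2)
  left_inv _ := rfl
  right_inv _ := rfl

/-- A block of cloud centres and channel inputs, as a sequence of letters. -/
def wordLetters : (ι → Q) × (ι → X1) × (ι → X2) ≃ (ι → Q × X1 × X2) where
  toFun t i := (t.1 i, t.2.1 i, t.2.2 i)
  invFun f := (fun i => (f i).1, fun i => (f i).2.1, fun i => (f i).2.2)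
  left_inv _ := rfl
  right_inv _ := rfl

/-- The outcome of the transmission of a block, as a sequence of single-letter outcomes. -/
def outcomeLetters :
    ((((ι → S1) × (ι → S2)) × (ι → W)) × ((ι → Q) × (ι → X1) × (ι → X2))) × (ι → Y) ≃
      (ι → (((S1 × S2) × W) × (Q × X1 × X2)) × Y) where
  toFun z i := ((sourceLetters z.1.1 i, wordLetters z.1.2 i), z.2 i)
  invFun f := ((sourceLetters.symm fun i => (f i).1.1, wordLetters.symm fun i => (f i).1.2),
    fun i => (f i).2)
  left_inv _ := rfl
  right_inv _ := rfl

/-- The law of a block of independent source letters. -/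
def blockSource (ι : Type) [Fintype ι] (src : (S1 × S2) × W → ℝ) :
    ((ι → S1) × (ι → S2)) × (ι → W) → ℝ :=
  piPmf (fun _ => src) ∘ sourceLetters

/-- The channel that acts independently on the letters of a block. -/
def blockChannel (ι : Type) [Fintype ι] (chan : Q × X1 × X2 → Y → ℝ)
    (t : (ι → Q) × (ι → X1) × (ι → X2)) : (ι → Y) → ℝ :=
  piPmf fun i => chan (wordLetters t i)

theorem blockSource_isPmf (ι : Type) [Fintype ι] [DecidableEq ι] [Fintype S1] [Fintype S2]
    [Fintype W] {src : (S1 × S2) × W → ℝ} (hsrc : IsPmf src) : IsPmf (blockSource ι src) :=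
  have hpi := IsPmf.piPmf fun _ : ι => hsrc
  ⟨fun _ => hpi.1 _, (sourceLetters.sum_comp _).trans hpi.2⟩

theorem blockChannel_isPmf (ι : Type) [Fintype ι] [DecidableEq ι] [Fintype Y]
    {chan : Q × X1 × X2 → Y → ℝ} (hchan : ∀ t, IsPmf (chan t)) (t : (ι → Q) × (ι → X1) × (ι → X2)) :
    IsPmf (blockChannel ι chan t) :=
  IsPmf.piPmf fun _ => hchan _

namespace SuperpositionScheme

variable [DecidableEq ι] [Fintype Q] [Fintype X1] [Fintype X2]
  (M : SuperpositionScheme S1 S2 U Q X1 X2)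
  {src : (S1 × S2) × W → ℝ} {chan : Q × X1 × X2 → Y → ℝ} (e : ErrorEvent)
  (z z' : ((((ι → S1) × (ι → S2)) × (ι → W)) × ((ι → Q) × (ι → X1) × (ι → X2))) × (ι → Y))

/-- The superposition code for blocks whose codewords have independent letters. -/
def block (ι : Type) [Fintype ι] [DecidableEq ι] :
    SuperpositionScheme (ι → S1) (ι → S2) (ι → U) (ι → Q) (ι → X1) (ι → X2) where
  common1 a i := M.common1 (a i)
  common2 a i := M.common2 (a i)
  cloudLaw := piPmf fun _ => M.cloudLaw
  inputLaw1 q a := piPmf fun i => M.inputLaw1 (q i) (a i)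
  inputLaw2 q a := piPmf fun i => M.inputLaw2 (q i) (a i)
  cloudLaw_isPmf := IsPmf.piPmf fun _ => M.cloudLaw_isPmf
  inputLaw1_isPmf q a := IsPmf.piPmf fun i => M.inputLaw1_isPmf (q i) (a i)
  inputLaw2_isPmf q a := IsPmf.piPmf fun i => M.inputLaw2_isPmf (q i) (a i)

theorem block_consistent (hsrc : ∀ r, 0 ≤ src r) (hcons : ∀ r, 0 < src r → r.1 ∈ M.consistent)
    (r : ((ι → S1) × (ι → S2)) × (ι → W)) (hr : 0 < blockSource ι src r) :
    r.1 ∈ (M.block ι).consistent :=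
  funext fun i => hcons _ (pos_of_piPmf_pos (fun _ => hsrc) hr i)

theorem jointLaw_block : jointLaw (blockSource ι src) (M.block ι).wordLaw (blockChannel ι chan) =
    piPmf (fun _ => jointLaw src M.wordLaw chan) ∘ outcomeLetters := by
  ext z
  simp [jointLaw, compProd, wordLaw, block, blockSource, blockChannel, piPmf, outcomeLetters,
    wordLetters, sourceLetters, Finset.prod_mul_distrib]

theorem density_block :
    ((M.block ι).sharedPart e).density (blockSource ι src) (blockChannel ι chan) z =
      ∏ i, (M.sharedPart e).density src chan (outcomeLetters z i) := by
  cases e <;>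
  simp [SharedPart.density, sharedPart, compProd, block, blockSource, blockChannel, piPmf,
    outcomeLetters, wordLetters, sourceLetters, Finset.prod_mul_distrib]

theorem view_block_eq_iff :
    ((M.block ι).sharedPart e).view z = ((M.block ι).sharedPart e).view z' ↔
      (fun i => (M.sharedPart e).view (outcomeLetters z i)) =
        fun i => (M.sharedPart e).view (outcomeLetters z' i) := by
  cases e <;>
  simp [SharedPart.view, sharedPart, block, outcomeLetters, wordLetters, sourceLetters, Prod.map,
    funext_iff, forall_and]

variable [Fintype S1] [Fintype S2] [Fintype W] [Fintype Y]

theorem jointLaw_block_isPmf (hsrc : IsPmf src) (hchan : ∀ t, IsPmf (chan t)) :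
    IsPmf (jointLaw (blockSource ι src) (M.block ι).wordLaw (blockChannel ι chan)) :=
  (blockSource_isPmf ι hsrc).jointLaw (M.block ι).wordLaw_isPmf (blockChannel_isPmf ι hchan)

theorem prD_view_block :
    prD (jointLaw (blockSource ι src) (M.block ι).wordLaw (blockChannel ι chan))
        ((M.block ι).sharedPart e).view (((M.block ι).sharedPart e).view z) =
      ∏ i, prD (jointLaw src M.wordLaw chan) (M.sharedPart e).view
        ((M.sharedPart e).view (outcomeLetters z i)) := by
  rw [prD_congr _ fun z' => M.view_block_eq_iff e z' z, jointLaw_block]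
  exact (congr_fun (prD_comp_equiv outcomeLetters _
    fun f i => (M.sharedPart e).view (f i)) _).trans (congr_fun (prD_piPmf_comp _ _) _)

end SuperpositionScheme

end BlockCode

section TypicalLogRatio

namespace SharedPart

variable {Θ W T Y : Type} [Fintype T] {gen : Θ → T → ℝ}
  (P : SharedPart gen) {src : Θ × W → ℝ} {chan : T → Y → ℝ}

theorem density_pos {z : ((Θ × W) × T) × Y} (hz : 0 < jointLaw src gen chan z) :
    0 < P.density src chan z :=
  pos_of_mul_pos_right (P.rest_mul_density src chan z ▸ hz) (P.rest_nonneg _ _)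

variable [Fintype Θ] [Fintype W] [Fintype Y]

theorem exp_mul_prD_view_le_density_iff (hJ : ∀ z, 0 ≤ jointLaw src gen chan z) {a : ℝ}
    {z : ((Θ × W) × T) × Y} (hz : 0 < jointLaw src gen chan z) :
    Real.exp a * prD (jointLaw src gen chan) P.view (P.view z) ≤ P.density src chan z ↔
      a ≤ P.logRatio src chan z := by
  have hden := P.density_pos hz
  have hview := hz.trans_le (le_prD hJ P.view z)
  rw [logRatio, ← Real.log_div hden.ne' hview.ne', Real.le_log_iff_exp_le (div_pos hden hview),
    le_div_iff₀ hview]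

end SharedPart

namespace SuperpositionScheme

variable {ι S1 S2 W U Q X1 X2 Y : Type} [Fintype ι] [DecidableEq ι] [Fintype S1] [Fintype S2]
  [Fintype W] [Fintype Q] [Fintype X1] [Fintype X2] [Fintype Y]
  (M : SuperpositionScheme S1 S2 U Q X1 X2) {src : (S1 × S2) × W → ℝ} {chan : Q × X1 × X2 → Y → ℝ}
  {z : ((((ι → S1) × (ι → S2)) × (ι → W)) × ((ι → Q) × (ι → X1) × (ι → X2))) × (ι → Y)}

theorem logRatio_block (hJ : ∀ z, 0 ≤ jointLaw src M.wordLaw chan z) (e : ErrorEvent)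
    (hz : 0 < jointLaw (blockSource ι src) (M.block ι).wordLaw (blockChannel ι chan) z) :
    ((M.block ι).sharedPart e).logRatio (blockSource ι src) (blockChannel ι chan) z =
      ∑ i, (M.sharedPart e).logRatio src chan (outcomeLetters z i) := by
  have hpos : ∀ i, 0 < jointLaw src M.wordLaw chan (outcomeLetters z i) :=
    pos_of_piPmf_pos (fun _ => hJ) (hz.trans_eq (congr_fun M.jointLaw_block z))
  simp only [SharedPart.logRatio]
  rw [density_block, prD_view_block,
    Real.log_prod fun i _ => ((M.sharedPart e).density_pos (hpos i)).ne',
    Real.log_prod fun i _ => ((hpos i).trans_le (le_prD hJ _ _)).ne', Finset.sum_sub_distrib]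

theorem exists_sum_logRatio_lt_of_not_passes (hsrc : IsPmf src) (hchan : ∀ t, IsPmf (chan t))
    (hcons : ∀ r, 0 < src r → r.1 ∈ M.consistent) {a : ℝ}
    (hz : 0 < jointLaw (blockSource ι src) (M.block ι).wordLaw (blockChannel ι chan) z)
    (hfail : ¬Passes (blockSource ι src) (blockChannel ι chan) (M.block ι).consistent
      (M.block ι).sharedPart (Real.exp a) z) :
    ∃ e, ∑ i, (M.sharedPart e).logRatio src chan (outcomeLetters z i) < a := by
  have hsrcz : 0 < blockSource ι src z.1.1 := ((blockSource_isPmf ι hsrc).1 _).lt_of_ne' fun h0 =>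
    hz.ne' (by simp [jointLaw, compProd, h0])
  by_contra! hle
  refine hfail ⟨M.block_consistent hsrc.1 hcons _ hsrcz, fun e => ?_⟩
  rw [SharedPart.exp_mul_prD_view_le_density_iff _ (M.jointLaw_block_isPmf hsrc hchan).1 hz,
    M.logRatio_block (hsrc.jointLaw M.wordLaw_isPmf hchan).1 e hz]
  exact hle e

theorem sum_jointLaw_mul_not_passes_le (hsrc : IsPmf src) (hchan : ∀ t, IsPmf (chan t))
    (hcons : ∀ r, 0 < src r → r.1 ∈ M.consistent) (a : ℝ) :
    ∑ z, jointLaw (blockSource ι src) (M.block ι).wordLaw (blockChannel ι chan) z *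
        (if Passes (blockSource ι src) (blockChannel ι chan) (M.block ι).consistent
          (M.block ι).sharedPart (Real.exp a) z then 0 else 1) ≤
      ∑ e, ∑ z, piPmf (fun _ : ι => jointLaw src M.wordLaw chan) z *
        (if ∑ i, (M.sharedPart e).logRatio src chan (z i) < a then 1 else 0) := by
  calc _ ≤ ∑ z, jointLaw (blockSource ι src) (M.block ι).wordLaw (blockChannel ι chan) z *
        ∑ e, (if ∑ i, (M.sharedPart e).logRatio src chan (outcomeLetters z i) < a
          then 1 else 0) := by
        refine sum_mul_le_sum_mul (M.jointLaw_block_isPmf hsrc hchan).1 fun z hz => ?_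
        have hterm : ∀ e, 0 ≤ if ∑ i, (M.sharedPart e).logRatio src chan (outcomeLetters z i) < a
            then (1 : ℝ) else 0 := fun e => by split_ifs <;> simp
        split_ifs with hpass
        · exact Finset.sum_nonneg fun e _ => hterm e
        · obtain ⟨e, he⟩ := M.exists_sum_logRatio_lt_of_not_passes hsrc hchan hcons hz hpass
          simpa [he] using Finset.single_le_sum (fun e _ => hterm e) (Finset.mem_univ e)
    _ = _ := by
        simp_rw [Finset.mul_sum]
        rw [Finset.sum_comm]
        simp_rw [jointLaw_block]
        exact Finset.sum_congr rfl fun e _ => outcomeLetters.sum_comp fun z =>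
          piPmf (fun _ : ι => jointLaw src M.wordLaw chan) z *
            (if ∑ i, (M.sharedPart e).logRatio src chan (z i) < a then 1 else 0)

theorem tendsto_sum_jointLaw_mul_not_passes (hsrc : IsPmf src) (hchan : ∀ t, IsPmf (chan t))
    (hcons : ∀ r, 0 < src r → r.1 ∈ M.consistent) {δ : ℝ} (hδ : ∀ e, δ <
      ∑ z, jointLaw src M.wordLaw chan z * (M.sharedPart e).logRatio src chan z) :
    Filter.Tendsto (fun n : ℕ => ∑ z, jointLaw (blockSource (Fin n) src) (M.block (Fin n)).wordLaw
        (blockChannel (Fin n) chan) z *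
        (if Passes (blockSource (Fin n) src) (blockChannel (Fin n) chan)
          (M.block (Fin n)).consistent (M.block (Fin n)).sharedPart (Real.exp (n * δ)) z
          then 0 else 1)) Filter.atTop (nhds 0) := by
  have hJ := hsrc.jointLaw M.wordLaw_isPmf hchan
  choose ρ hρ0 hρ1 hρ using fun e => exists_lowerTail_le_pow hJ _ (hδ e)
  have hpow : Filter.Tendsto (fun n : ℕ => ∑ e, ρ e ^ n) Filter.atTop (nhds 0) := by
    simpa using tendsto_finsetSum Finset.univ fun e _ =>
      tendsto_pow_atTop_nhds_zero_of_lt_one (hρ0 e) (hρ1 e)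
  refine squeeze_zero (fun n => Finset.sum_nonneg fun z _ => mul_nonneg
    ((M.jointLaw_block_isPmf hsrc hchan).1 z) (by split_ifs <;> simp)) (fun n => ?_) hpow
  exact (M.sum_jointLaw_mul_not_passes_le hsrc hchan hcons _).trans
    (Finset.sum_le_sum fun e _ => hρ e n)

variable [Fintype U]

theorem tendsto_sum_codebookLaw_mul_errorProb [Nonempty S1] [Nonempty S2] (hsrc : IsPmf src)
    (hchan : ∀ t, IsPmf (chan t)) (hcons : ∀ r, 0 < src r → r.1 ∈ M.consistent) {δ : ℝ}
    (hδ0 : 0 < δ) (hδ : ∀ e, δ <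
      ∑ z, jointLaw src M.wordLaw chan z * (M.sharedPart e).logRatio src chan z) :
    Filter.Tendsto (fun n : ℕ => ∑ k, (M.block (Fin n)).codebookLaw k *
      errorProb (blockSource (Fin n) src) (blockChannel (Fin n) chan) ((M.block (Fin n)).encode k)
        (testDecoder (Passes (blockSource (Fin n) src) (blockChannel (Fin n) chan)
          (M.block (Fin n)).consistent (M.block (Fin n)).sharedPart (Real.exp (n * δ)))
          ((M.block (Fin n)).encode k))) Filter.atTop (nhds 0) := by
  have hcard : Filter.Tendsto (fun n : ℕ => Fintype.card ErrorEvent / Real.exp (n * δ))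
      Filter.atTop (nhds 0) :=
    (Real.tendsto_exp_atTop.comp
      (tendsto_natCast_atTop_atTop.atTop_mul_const hδ0)).const_div_atTop _
  refine squeeze_zero (fun n => Finset.sum_nonneg fun k _ => mul_nonneg
    ((M.block _).codebookLaw_isPmf.1 k) ?_) (fun n => ?_)
    (add_zero (0 : ℝ) ▸ (M.tendsto_sum_jointLaw_mul_not_passes hsrc hchan hcons hδ).add hcard)
  · exact errorProb_nonneg (blockSource_isPmf (Fin n) hsrc).1
      (fun t => (blockChannel_isPmf (Fin n) hchan t).1) _ _
  · exact (M.block _).isRandomCode.sum_mul_errorProb_le (blockSource_isPmf (Fin n) hsrc)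
      (M.block _).wordLaw_isPmf (blockChannel_isPmf (Fin n) hchan) (M.block_consistent hsrc.1 hcons)
      (Real.exp_pos _)

end SuperpositionScheme

end TypicalLogRatio

section InformationGap

variable {Ω Θ W T Y α β γ σ : Type} [Fintype Y] [Fintype α] [Fintype γ]

theorem condMutInf_compProd [Fintype Ω] {μ : Ω → ℝ} (hμ : IsPmf μ) {k : Ω → Y → ℝ}
    (hk : ∀ ω, IsPmf (k ω)) (A : Ω → α) (C : Ω → γ) {κ : α → γ → Y → ℝ}
    (hκ : ∀ ω, k ω = κ (A ω) (C ω)) :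
    condMutInf (compProd μ k) (fun z => A z.1) Prod.snd (fun z => C z.1) =
      ∑ z, compProd μ k z * (Real.log (k z.1 z.2) + Real.log (prD μ C (C z.1)) -
        Real.log (prD (compProd μ k) (fun z => (z.2, C z.1)) (z.2, C z.1))) := by
  have hfst : ∀ {δ : Type} (X : Ω → δ), prD (compProd μ k) (fun z => X z.1) = prD μ X := fun X => by
    rw [prD_comp _ Prod.fst X, prD_compProd_fst μ fun ω => (hk ω).2]
  have hAYC : ∀ z : Ω × Y, prD (compProd μ k) (fun z => (A z.1, z.2, C z.1)) (A z.1, z.2, C z.1) =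
      prD μ (fun ω => (A ω, C ω)) (A z.1, C z.1) * k z.1 z.2 := fun z => by
    rw [hκ]
    exact (prD_congr _ fun z' => by simp only [Prod.map, id, Prod.mk.injEq]; tauto).trans
      (congr_fun (prD_compProd_map (F := fun ω => (A ω, C ω)) (G := id)
        (κ := fun a => κ a.1 a.2) fun ω => (prD_id _).trans (hκ ω)) ((A z.1, C z.1), z.2))
  have hsum := sum_mul_congr_of_pos (hμ.compProd hk).1
    (f := fun z => Real.log (prD (compProd μ k) (fun z => (A z.1, z.2, C z.1))
      (A z.1, z.2, C z.1)))
    (g := fun z => Real.log (prD μ (fun ω => (A ω, C ω)) (A z.1, C z.1)) + Real.log (k z.1 z.2))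
    fun z hz => by
      rw [hAYC, Real.log_mul]
      · exact ((pos_of_mul_pos_left hz ((hk _).1 _)).trans_le
          (le_prD hμ.1 (fun ω => (A ω, C ω)) z.1)).ne'
      · exact (pos_of_mul_pos_right hz (hμ.1 _)).ne'
  simp only [condMutInf, condEnt, ent_eq_neg_sum, hsum, hfst C, hfst fun ω => (A ω, C ω), mul_add,
    mul_sub, Finset.sum_add_distrib, Finset.sum_sub_distrib]
  ring

theorem condEnt_eq_sum_log [Fintype Ω] [Fintype σ] [Fintype β] (μ : Ω → ℝ) {S : Ω → σ} {B : Ω → β}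
    (hSB : Function.Injective fun ω => (S ω, B ω)) :
    condEnt μ S B = ∑ ω, μ ω * (Real.log (prD μ B (B ω)) - Real.log (μ ω)) := by
  have hinj : ∀ ω, prD μ (fun ω => (S ω, B ω)) (S ω, B ω) = μ ω := fun ω =>
    (prD_congr μ fun ω' => hSB.eq_iff).trans (congr_fun (prD_id μ) ω)
  simp only [condEnt, ent_eq_neg_sum, hinj, mul_sub, Finset.sum_sub_distrib]
  ring

theorem prD_jointLaw_source [Fintype Θ] [Fintype W] [Fintype T] (src : Θ × W → ℝ)
    {gen : Θ → T → ℝ} {chan : T → Y → ℝ} (hgen : ∀ θ, IsPmf (gen θ)) (hchan : ∀ t, IsPmf (chan t)) :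
    prD (jointLaw src gen chan) (fun z => z.1.1) = src := by
  rw [prD_comp _ Prod.fst Prod.fst, jointLaw,
    prD_compProd_fst _ fun v : (Θ × W) × T => (hchan v.2).2,
    prD_compProd_fst _ fun r : Θ × W => (hgen r.1).2]

namespace SharedPart

variable [Fintype Θ] [Fintype W] [Fintype T] [Fintype σ] [Fintype β] {src : Θ × W → ℝ}
  {gen : Θ → T → ℝ} {chan : T → Y → ℝ} (P : SharedPart gen)

theorem prD_msg_word :
    prD (compProd src fun r => gen r.1) (Prod.map (Prod.map P.msg id) P.word) = fun v =>
      prD src (Prod.map P.msg id) v.1 * P.law v.1.1 v.2 :=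
  prD_compProd_map (F := Prod.map P.msg id) (κ := fun b : P.Msg × W => P.law b.1)
    fun r => P.prD_word r.1

theorem condMutInf_sub_condEnt_eq_sum_logRatio (hsrc : IsPmf src) (hgen : ∀ θ, IsPmf (gen θ))
    (hchan : ∀ t, IsPmf (chan t)) {A : (Θ × W) × T → α} {C : (Θ × W) × T → γ}
    {S : Θ × W → σ} {B : Θ × W → β} {κ : α → γ → Y → ℝ} (hκ : ∀ v, chan v.2 = κ (A v) (C v))
    (hC : ∀ v v', C v = C v' ↔
      Prod.map (Prod.map P.msg id) P.word v = Prod.map (Prod.map P.msg id) P.word v')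
    (hB : ∀ r r', B r = B r' ↔ Prod.map P.msg id r = Prod.map P.msg id r')
    (hSB : Function.Injective fun r => (S r, B r)) :
    condMutInf (jointLaw src gen chan) (fun z => A z.1) Prod.snd (fun z => C z.1) -
        condEnt src S B =
      ∑ z, jointLaw src gen chan z * P.logRatio src chan z := by
  have hsource : condEnt src S B = ∑ z, jointLaw src gen chan z *
      (Real.log (prD src B (B z.1.1)) - Real.log (src z.1.1)) := by
    rw [condEnt_eq_sum_log src hSB, ← sum_prD_mul _ (fun z : ((Θ × W) × T) × Y => z.1.1)
      fun r => Real.log (prD src B (B r)) - Real.log (src r), prD_jointLaw_source src hgen hchan]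
  rw [hsource, jointLaw, condMutInf_compProd (hsrc.compProd fun r => hgen r.1)
    (fun v => hchan v.2) A C hκ, ← jointLaw, ← Finset.sum_sub_distrib]
  simp_rw [← mul_sub]
  refine sum_mul_congr_of_pos (hsrc.jointLaw hgen hchan).1 fun z hz => ?_
  have hview : prD (jointLaw src gen chan) (fun z => (z.2, C z.1)) (z.2, C z.1) =
      prD (jointLaw src gen chan) P.view (P.view z) :=
    prD_congr _ fun z' => by
      simp only [Prod.mk.injEq, hC, view, Prod.map_apply', id]
      tauto
  have hmsgword : prD (compProd src fun r => gen r.1) C (C z.1) =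
      prD src B (B z.1.1) * P.law (P.msg z.1.1.1) (P.word z.1.2) := by
    rw [prD_congr _ fun v => hC v z.1, prD_msg_word, prD_congr src fun r => hB r z.1.1]
    rfl
  have hden := (P.density_pos hz).ne'
  simp only [density, mul_ne_zero_iff] at hden
  have hsrcz : 0 < src z.1.1 := (hsrc.1 _).lt_of_ne' hden.1.1
  rw [hview, hmsgword, logRatio, density, Real.log_mul (mul_ne_zero hden.1.1 hden.1.2) hden.2,
    Real.log_mul hden.1.1 hden.1.2,
    Real.log_mul (hsrcz.trans_le (le_prD hsrc.1 B _)).ne' hden.1.2]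
  ring

end SharedPart

end InformationGap

section Receivers

variable {S1 S2 W1 W2 W U Q X1 X2 Y1 Y2 Y : Type}

/-- The law of the sources and of the side information `kw` of a receiver. -/
def receiverSource [Fintype S1] [Fintype S2] [Fintype W1] [Fintype W2]
    (pS : S1 × S2 × W1 × W2 → ℝ) (kw : W1 × W2 → W) : (S1 × S2) × W → ℝ :=
  prD pS fun r => ((r.1, r.2.1), kw r.2.2)

/-- The channel from the inputs, with their cloud centre, to the output `ky` of a receiver. -/
def receiverChannel [Fintype Y1] [Fintype Y2] (chan : X1 → X2 → Y1 × Y2 → ℝ)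
    (ky : Y1 × Y2 → Y) (t : Q × X1 × X2) : Y → ℝ :=
  prD (chan t.2.1 t.2.2) ky

variable [Fintype S1] [Fintype S2] [Fintype W1] [Fintype W2] [Fintype Y1] [Fintype Y2]
  {pS : S1 × S2 × W1 × W2 → ℝ} {chan : X1 → X2 → Y1 × Y2 → ℝ}

theorem receiverSource_isPmf [Fintype W] (hpS : IsPmf pS) (kw : W1 × W2 → W) :
    IsPmf (receiverSource pS kw) :=
  hpS.prD _

theorem exists_pos_of_receiverSource_pos {kw : W1 × W2 → W} {r : (S1 × S2) × W}
    (hr : 0 < receiverSource pS kw r) : ∃ w, 0 < pS (r.1.1, r.1.2, w) := by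
  by_contra! hle
  refine hr.not_ge (Finset.sum_nonpos fun s _ => ?_)
  split_ifs with hs
  · subst hs
    exact hle s.2.2
  · exact le_rfl

theorem receiverChannel_isPmf [Fintype Y] (hchan : ∀ x1 x2, IsPmf (chan x1 x2)) (ky : Y1 × Y2 → Y)
    (t : Q × X1 × X2) : IsPmf (receiverChannel chan ky t) :=
  (hchan t.2.1 t.2.2).prD ky

theorem errorProb_receiver_block [Fintype W] [Fintype Y] (kw : W1 × W2 → W) (ky : Y1 × Y2 → Y)
    {n : ℕ} (cloud : (Fin n → S1) × (Fin n → S2) → Fin n → Q) (f1 : (Fin n → S1) → Fin n → X1)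
    (f2 : (Fin n → S2) → Fin n → X2)
    (g : (Fin n → Y) → (Fin n → W) → (Fin n → S1) × (Fin n → S2)) :
    errorProb (blockSource (Fin n) (receiverSource pS kw))
        (blockChannel (Fin n) (receiverChannel chan ky)) (fun θ => (cloud θ, f1 θ.1, f2 θ.2)) g =
      ∑ sb : Fin n → S1 × S2 × W1 × W2, ∑ yb : Fin n → Y1 × Y2,
        ((∏ i, pS (sb i)) *
          ∏ j, chan (f1 (fun i => (sb i).1) j) (f2 (fun i => (sb i).2.1) j) (yb j)) *
        if g (fun j => ky (yb j)) (fun i => kw (sb i).2.2)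
          = (fun i => (sb i).1, fun i => (sb i).2.1) then 0 else 1 := by
  have houtput : ∀ (t : (Fin n → Q) × (Fin n → X1) × (Fin n → X2)) (F : (Fin n → Y) → ℝ),
      ∑ y, blockChannel (Fin n) (receiverChannel chan ky) t y * F y =
        ∑ yb : Fin n → Y1 × Y2, (∏ j, chan (t.2.1 j) (t.2.2 j) (yb j)) * F fun j => ky (yb j) := by
    intro t F
    rw [← sum_prD_mul (fun yb : Fin n → Y1 × Y2 => ∏ j, chan (t.2.1 j) (t.2.2 j) (yb j))]
    exact congrArg (fun p : (Fin n → Y) → ℝ => ∑ y, p y * F y)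
      (prD_piPmf_comp (fun j => chan (t.2.1 j) (t.2.2 j)) fun _ => ky).symm
  have hsource : ∀ F : ((Fin n → S1) × (Fin n → S2)) × (Fin n → W) → ℝ,
      ∑ r, blockSource (Fin n) (receiverSource pS kw) r * F r =
        ∑ sb : Fin n → S1 × S2 × W1 × W2, (∏ i, pS (sb i)) *
          F ((fun i => (sb i).1, fun i => (sb i).2.1), fun i => kw (sb i).2.2) := by
    intro F
    rw [← sourceLetters.symm.sum_comp]
    simp only [blockSource, Function.comp_apply, Equiv.apply_symm_apply, receiverSource]
    rw [← prD_piPmf_comp]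
    exact sum_prD_mul _ _ fun f => F (sourceLetters.symm f)
  rw [errorProb, hsource]
  simp only [houtput, Finset.mul_sum, mul_assoc]
  congr!

variable [Fintype X1] [Fintype X2]

theorem cmacErr_le (hpS : ∀ r, 0 ≤ pS r) (hchan : ∀ x1 x2 y, 0 ≤ chan x1 x2 y) {n : ℕ}
    (cloud : (Fin n → S1) × (Fin n → S2) → Fin n → Q) (f1 : (Fin n → S1) → Fin n → X1)
    (f2 : (Fin n → S2) → Fin n → X2)
    (g1 : (Fin n → Y1) → (Fin n → W1) → (Fin n → S1) × (Fin n → S2))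
    (g2 : (Fin n → Y2) → (Fin n → W2) → (Fin n → S1) × (Fin n → S2)) :
    cmacErr pS chan n n f1 f2 g1 g2 ≤
      errorProb (blockSource (Fin n) (receiverSource pS Prod.fst))
        (blockChannel (Fin n) (receiverChannel chan Prod.fst))
        (fun θ => (cloud θ, f1 θ.1, f2 θ.2)) g1 +
      errorProb (blockSource (Fin n) (receiverSource pS Prod.snd))
        (blockChannel (Fin n) (receiverChannel chan Prod.snd))
        (fun θ => (cloud θ, f1 θ.1, f2 θ.2)) g2 := by
  simp only [errorProb_receiver_block, ← Finset.sum_add_distrib, ← mul_add]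
  refine Finset.sum_le_sum fun sb _ => Finset.sum_le_sum fun yb _ =>
    mul_le_mul_of_nonneg_left ?_ (mul_nonneg (Finset.prod_nonneg fun i _ => hpS _)
      (Finset.prod_nonneg fun j _ => hchan _ _ _))
  split_ifs <;> simp_all

namespace SuperpositionScheme

variable {nq : ℕ}

/-- The four rate conditions for the receiver with side information `kw` and channel output `ky`,
one for each type of decoding error. -/
structure RateConditions [Fintype U] [Fintype W] [Fintype Y]
    (M : SuperpositionScheme S1 S2 U (Fin nq) X1 X2)
    (pS : S1 × S2 × W1 × W2 → ℝ) (chan : X1 → X2 → Y1 × Y2 → ℝ) (kw : W1 × W2 → W)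
    (ky : Y1 × Y2 → Y) : Prop where
  first : condEnt pS (fun s => s.1) (fun s => (s.2.1, kw s.2.2)) <
    condMutInf (cmacJointMeasure nq M.cloudLaw pS M.inputLaw1 M.inputLaw2 chan)
      (fun z => z.2.2.1) (fun z => ky z.2.2.2.2)
      (fun z => (z.2.2.2.1, z.2.1.2.1, kw z.2.1.2.2, z.1))
  second : condEnt pS (fun s => s.2.1) (fun s => (s.1, kw s.2.2)) <
    condMutInf (cmacJointMeasure nq M.cloudLaw pS M.inputLaw1 M.inputLaw2 chan)
      (fun z => z.2.2.2.1) (fun z => ky z.2.2.2.2)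
      (fun z => (z.2.2.1, z.2.1.1, kw z.2.1.2.2, z.1))
  sameCloud : condEnt pS (fun s => (s.1, s.2.1)) (fun s => (M.common1 s.1, kw s.2.2)) <
    condMutInf (cmacJointMeasure nq M.cloudLaw pS M.inputLaw1 M.inputLaw2 chan)
      (fun z => (z.2.2.1, z.2.2.2.1)) (fun z => ky z.2.2.2.2)
      (fun z => (M.common1 z.2.1.1, kw z.2.1.2.2, z.1))
  total : condEnt pS (fun s => (s.1, s.2.1)) (fun s => kw s.2.2) <
    condMutInf (cmacJointMeasure nq M.cloudLaw pS M.inputLaw1 M.inputLaw2 chan)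
      (fun z => (z.2.2.1, z.2.2.2.1)) (fun z => ky z.2.2.2.2) (fun z => kw z.2.1.2.2)

/-- The source pair, side information, cloud centre, inputs and output, as they concern one
receiver, in the grouping of `jointLaw`. -/
def receiverOutcome (kw : W1 × W2 → W) (ky : Y1 × Y2 → Y)
    (z : Q × (S1 × S2 × W1 × W2) × X1 × X2 × (Y1 × Y2)) :
    (((S1 × S2) × W) × (Q × X1 × X2)) × Y :=
  ((((z.2.1.1, z.2.1.2.1), kw z.2.1.2.2), (z.1, z.2.2.1, z.2.2.2.1)), ky z.2.2.2.2)

theorem prD_cmacJointMeasure (M : SuperpositionScheme S1 S2 U (Fin nq) X1 X2) (kw : W1 × W2 → W)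
    (ky : Y1 × Y2 → Y) :
    prD (cmacJointMeasure nq M.cloudLaw pS M.inputLaw1 M.inputLaw2 chan)
        (receiverOutcome kw ky) =
      jointLaw (receiverSource pS kw) M.wordLaw (receiverChannel chan ky) := by
  let regroup : (((S1 × S2 × W1 × W2) × (Fin nq × X1 × X2)) × (Y1 × Y2)) ≃
      (Fin nq × (S1 × S2 × W1 × W2) × X1 × X2 × (Y1 × Y2)) :=
    { toFun v := (v.1.2.1, v.1.1, v.1.2.2.1, v.1.2.2.2, v.2)
      invFun z := ((z.2.1, (z.1, z.2.2.1, z.2.2.2.1)), z.2.2.2.2)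
      left_inv _ := rfl
      right_inv _ := rfl }
  have hmeasure : cmacJointMeasure nq M.cloudLaw pS M.inputLaw1 M.inputLaw2 chan ∘ regroup =
      compProd (compProd pS fun r => M.wordLaw (r.1, r.2.1)) fun v => chan v.2.2.1 v.2.2.2 := by
    ext v
    simp only [cmacJointMeasure, compProd, wordLaw, Function.comp_apply, regroup, Equiv.coe_fn_mk]
    ring
  have hsourceWord : prD (compProd pS fun r => M.wordLaw (r.1, r.2.1))
      (Prod.map (fun r => ((r.1, r.2.1), kw r.2.2)) id) =
      compProd (receiverSource pS kw) fun r => M.wordLaw r.1 :=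
    prD_compProd_map (F := fun r : S1 × S2 × W1 × W2 => ((r.1, r.2.1), kw r.2.2))
      (κ := fun r => M.wordLaw r.1) fun r => prD_id _
  rw [← prD_comp_equiv regroup, hmeasure, jointLaw, ← hsourceWord]
  exact prD_compProd_map
    (F := Prod.map (fun r : S1 × S2 × W1 × W2 => ((r.1, r.2.1), kw r.2.2)) id)
    (κ := fun v => receiverChannel chan ky v.2) fun v => rfl

variable [Fintype W] [Fintype Y] {M : SuperpositionScheme S1 S2 U (Fin nq) X1 X2}
  {kw : W1 × W2 → W} {ky : Y1 × Y2 → Y}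

theorem sum_logRatio_pos_of_condEnt_lt_condMutInf (hpS : IsPmf pS)
    (hchan : ∀ x1 x2, IsPmf (chan x1 x2)) {e : ErrorEvent}
    {α β γ σ : Type} [Fintype α] [Fintype β] [Fintype γ] [Fintype σ]
    (A : ((S1 × S2) × W) × (Fin nq × X1 × X2) → α) (C : ((S1 × S2) × W) × (Fin nq × X1 × X2) → γ)
    (S : (S1 × S2) × W → σ) (B : (S1 × S2) × W → β) (κ : α → γ → Y → ℝ)
    (h : condEnt pS (fun s => S ((s.1, s.2.1), kw s.2.2)) (fun s => B ((s.1, s.2.1), kw s.2.2)) <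
      condMutInf (cmacJointMeasure nq M.cloudLaw pS M.inputLaw1 M.inputLaw2 chan)
        (fun z => A (receiverOutcome kw ky z).1) (fun z => (receiverOutcome kw ky z).2)
        (fun z => C (receiverOutcome kw ky z).1))
    (hκ : ∀ v, receiverChannel chan ky v.2 = κ (A v) (C v))
    (hC : ∀ v v', C v = C v' ↔
      Prod.map (Prod.map (M.sharedPart e).msg id) (M.sharedPart e).word v =
        Prod.map (Prod.map (M.sharedPart e).msg id) (M.sharedPart e).word v')
    (hB : ∀ r r', B r = B r' ↔
      Prod.map (M.sharedPart e).msg id r = Prod.map (M.sharedPart e).msg id r')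
    (hSB : Function.Injective fun r => (S r, B r)) :
    0 < ∑ z, jointLaw (receiverSource pS kw) M.wordLaw (receiverChannel chan ky) z *
      (M.sharedPart e).logRatio (receiverSource pS kw) (receiverChannel chan ky) z := by
  rw [condEnt_comp pS (fun s => ((s.1, s.2.1), kw s.2.2)) S B,
    condMutInf_comp _ (receiverOutcome kw ky) (fun z => A z.1) Prod.snd (fun z => C z.1),
    prD_cmacJointMeasure] at h
  exact (sub_pos.2 h).trans_eq ((M.sharedPart e).condMutInf_sub_condEnt_eq_sum_logRatio
    (receiverSource_isPmf hpS kw) M.wordLaw_isPmf (receiverChannel_isPmf hchan ky) hκ hC hB hSB)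

variable [Fintype U]

theorem RateConditions.sum_logRatio_pos (h : M.RateConditions pS chan kw ky) (hpS : IsPmf pS)
    (hchan : ∀ x1 x2, IsPmf (chan x1 x2)) (e : ErrorEvent) :
    0 < ∑ z, jointLaw (receiverSource pS kw) M.wordLaw (receiverChannel chan ky) z *
      (M.sharedPart e).logRatio (receiverSource pS kw) (receiverChannel chan ky) z := by
  cases e with
  | first =>
    refine sum_logRatio_pos_of_condEnt_lt_condMutInf hpS hchan (fun v => v.2.2.1)
      (fun v => (v.2.2.2, v.1.1.2, v.1.2, v.2.1)) (fun r => r.1.1) (fun r => (r.1.2, r.2))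
      (fun x1 c => prD (chan x1 c.1) ky) h.first (fun _ => rfl) ?_ ?_ ?_
    all_goals (simp only [Function.Injective, sharedPart, Prod.map, id, Prod.ext_iff]; tauto)
  | second =>
    refine sum_logRatio_pos_of_condEnt_lt_condMutInf hpS hchan (fun v => v.2.2.2)
      (fun v => (v.2.2.1, v.1.1.1, v.1.2, v.2.1)) (fun r => r.1.2) (fun r => (r.1.1, r.2))
      (fun x2 c => prD (chan c.1 x2) ky) h.second (fun _ => rfl) ?_ ?_ ?_
    all_goals (simp only [Function.Injective, sharedPart, Prod.map, id, Prod.ext_iff]; tauto)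
  | sameCloud =>
    refine sum_logRatio_pos_of_condEnt_lt_condMutInf hpS hchan (fun v => (v.2.2.1, v.2.2.2))
      (fun v => (M.common1 v.1.1.1, v.1.2, v.2.1)) (fun r => (r.1.1, r.1.2))
      (fun r => (M.common1 r.1.1, r.2)) (fun x _ => prD (chan x.1 x.2) ky) h.sameCloud
      (fun _ => rfl) ?_ ?_ ?_
    all_goals (simp only [Function.Injective, sharedPart, Prod.map, id, Prod.ext_iff]; tauto)
  | total =>
    refine sum_logRatio_pos_of_condEnt_lt_condMutInf hpS hchan (fun v => (v.2.2.1, v.2.2.2))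
      (fun v => v.1.2) (fun r => (r.1.1, r.1.2)) (fun r => r.2)
      (fun x _ => prD (chan x.1 x.2) ky) h.total (fun _ => rfl) ?_ ?_ ?_
    all_goals (simp only [Function.Injective, sharedPart, Prod.map, id, Prod.ext_iff]; tauto)

theorem RateConditions.exists_decoders_tendsto (h : M.RateConditions pS chan kw ky)
    (hpS : IsPmf pS) (hchan : ∀ x1 x2, IsPmf (chan x1 x2))
    (hcommon : ∀ s, 0 < pS s → M.common1 s.1 = M.common2 s.2.1) :
    ∃ g : ∀ n : ℕ, ((Fin n → U) → Fin n → Fin nq) × ((Fin n → S1) → Fin n → X1) ×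
        ((Fin n → S2) → Fin n → X2) → (Fin n → Y) → (Fin n → W) → (Fin n → S1) × (Fin n → S2),
      Filter.Tendsto (fun n => ∑ k, (M.block (Fin n)).codebookLaw k *
        errorProb (blockSource (Fin n) (receiverSource pS kw))
          (blockChannel (Fin n) (receiverChannel chan ky)) ((M.block (Fin n)).encode k) (g n k))
        Filter.atTop (nhds 0) := by
  obtain ⟨s⟩ := hpS.nonempty
  have : Nonempty S1 := ⟨s.1⟩
  have : Nonempty S2 := ⟨s.2.1⟩
  obtain ⟨δ, hδ⟩ := (Filter.eventually_all.2 fun e =>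
    Ioo_mem_nhdsGT (h.sum_logRatio_pos hpS hchan e)).exists
  refine ⟨_, M.tendsto_sum_codebookLaw_mul_errorProb (receiverSource_isPmf hpS kw)
    (receiverChannel_isPmf hchan ky) (fun r hr => ?_) (hδ .total).1 fun e => (hδ e).2⟩
  obtain ⟨w, hw⟩ := exists_pos_of_receiverSource_pos hr
  exact hcommon _ hw

end SuperpositionScheme

end Receivers

theorem cmac_correlated_sources_rate_one_achievable_general
    {S1 S2 W1 W2 U X1 X2 Y1 Y2 : Type} [Fintype S1] [Fintype S2] [Fintype W1] [Fintype W2]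
    [Fintype U] [Fintype X1] [Fintype X2] [Fintype Y1] [Fintype Y2]
    {pS : S1 × S2 × W1 × W2 → ℝ} (hpS : IsPmf pS)
    {chan : X1 → X2 → Y1 × Y2 → ℝ} (hchan : ∀ x1 x2, IsPmf (chan x1 x2))
    {nq : ℕ} (M : SuperpositionScheme S1 S2 U (Fin nq) X1 X2)
    (hcommon : ∀ s, 0 < pS s → M.common1 s.1 = M.common2 s.2.1)
    (h1 : M.RateConditions pS chan Prod.fst Prod.fst)
    (h2 : M.RateConditions pS chan Prod.snd Prod.snd) : cmacAchievable pS chan 1 := by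
  intro ε hε
  obtain ⟨g1, hg1⟩ := h1.exists_decoders_tendsto hpS hchan hcommon
  obtain ⟨g2, hg2⟩ := h2.exists_decoders_tendsto hpS hchan hcommon
  have hsum := hg1.add hg2
  rw [add_zero] at hsum
  obtain ⟨n, hn, hn0⟩ := ((hsum.eventually_lt_const hε).and (Filter.eventually_gt_atTop 0)).exists
  simp only [← Finset.sum_add_distrib, ← mul_add] at hn
  obtain ⟨k, hk⟩ := (M.block (Fin n)).codebookLaw_isPmf.exists_le_sum_mul fun k =>
    errorProb (blockSource (Fin n) (receiverSource pS Prod.fst))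
        (blockChannel (Fin n) (receiverChannel chan Prod.fst)) ((M.block _).encode k) (g1 n k) +
      errorProb (blockSource (Fin n) (receiverSource pS Prod.snd))
        (blockChannel (Fin n) (receiverChannel chan Prod.snd)) ((M.block _).encode k) (g2 n k)
  refine ⟨n, n, hn0, hn0, (one_mul _).symm, k.2.1, k.2.2, g1 n k, g2 n k, ?_⟩
  exact (cmacErr_le hpS.1 (fun x1 x2 => (hchan x1 x2).1)
    (fun θ => k.1 ((M.block (Fin n)).common1 θ.1)) _ _ _ _).trans_lt (hk.trans_lt hn)

/-- For arbitrarily correlated sources `(S1, S2)` with side information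
`W1`, `W2` at the two receivers of a DM compound MAC `p(y1,y2|x1,x2)` (both receivers
must reconstruct both sources), source-channel rate `b = 1` is achievable if there is
a joint distribution `p(q)p(s1,s2,w1,w2)p(x1|q,s1)p(x2|q,s2)p(y1,y2|x1,x2)` such that
for `k = 1, 2`: `H(S1|S2,Wk) < I(X1;Yk|X2,S2,Wk,Q)`, `H(S2|S1,Wk) < I(X2;Yk|X1,S1,Wk,Q)`,
`H(S1,S2|U,Wk) < I(X1,X2;Yk|U,Wk,Q)` and `H(S1,S2|Wk) < I(X1,X2;Yk|Wk)`, where `U` is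
the Gács–Körner common part of `S1` and `S2`. -/
theorem cmac_correlated_sources_rate_one_achievable
    {S1 S2 W1 W2 X1 X2 Y1 Y2 : Type}
    [Fintype S1] [Fintype S2] [Fintype W1] [Fintype W2]
    [Fintype X1] [Fintype X2] [Fintype Y1] [Fintype Y2]
    (pS : S1 × S2 × W1 × W2 → ℝ) (hpS : IsPmf pS)
    (chan : X1 → X2 → Y1 × Y2 → ℝ) (hchan : ∀ x1 x2, IsPmf (chan x1 x2))
    (h : ∃ (nq nu : ℕ) (pq : Fin nq → ℝ)
      (px1 : Fin nq → S1 → X1 → ℝ) (px2 : Fin nq → S2 → X2 → ℝ)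
      (u1 : S1 → Fin nu) (u2 : S2 → Fin nu),
      IsPmf pq ∧ (∀ q s1, IsPmf (px1 q s1)) ∧ (∀ q s2, IsPmf (px2 q s2)) ∧
      IsGKCommonPart pS (fun s => s.1) (fun s => s.2.1) u1 u2 ∧
      -- receiver 1
      (condEnt pS (fun s => s.1) (fun s => (s.2.1, s.2.2.1)) <
        condMutInf (cmacJointMeasure nq pq pS px1 px2 chan)
          (fun z => z.2.2.1) (fun z => z.2.2.2.2.1)
          (fun z => (z.2.2.2.1, z.2.1.2.1, z.2.1.2.2.1, z.1))) ∧
      (condEnt pS (fun s => s.2.1) (fun s => (s.1, s.2.2.1)) <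
        condMutInf (cmacJointMeasure nq pq pS px1 px2 chan)
          (fun z => z.2.2.2.1) (fun z => z.2.2.2.2.1)
          (fun z => (z.2.2.1, z.2.1.1, z.2.1.2.2.1, z.1))) ∧
      (condEnt pS (fun s => (s.1, s.2.1)) (fun s => (u1 s.1, s.2.2.1)) <
        condMutInf (cmacJointMeasure nq pq pS px1 px2 chan)
          (fun z => (z.2.2.1, z.2.2.2.1)) (fun z => z.2.2.2.2.1)
          (fun z => (u1 z.2.1.1, z.2.1.2.2.1, z.1))) ∧
      (condEnt pS (fun s => (s.1, s.2.1)) (fun s => s.2.2.1) <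
        condMutInf (cmacJointMeasure nq pq pS px1 px2 chan)
          (fun z => (z.2.2.1, z.2.2.2.1)) (fun z => z.2.2.2.2.1)
          (fun z => z.2.1.2.2.1)) ∧
      -- receiver 2
      (condEnt pS (fun s => s.1) (fun s => (s.2.1, s.2.2.2)) <
        condMutInf (cmacJointMeasure nq pq pS px1 px2 chan)
          (fun z => z.2.2.1) (fun z => z.2.2.2.2.2)
          (fun z => (z.2.2.2.1, z.2.1.2.1, z.2.1.2.2.2, z.1))) ∧
      (condEnt pS (fun s => s.2.1) (fun s => (s.1, s.2.2.2)) <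
        condMutInf (cmacJointMeasure nq pq pS px1 px2 chan)
          (fun z => z.2.2.2.1) (fun z => z.2.2.2.2.2)
          (fun z => (z.2.2.1, z.2.1.1, z.2.1.2.2.2, z.1))) ∧
      (condEnt pS (fun s => (s.1, s.2.1)) (fun s => (u1 s.1, s.2.2.2)) <
        condMutInf (cmacJointMeasure nq pq pS px1 px2 chan)
          (fun z => (z.2.2.1, z.2.2.2.1)) (fun z => z.2.2.2.2.2)
          (fun z => (u1 z.2.1.1, z.2.1.2.2.2, z.1))) ∧
      (condEnt pS (fun s => (s.1, s.2.1)) (fun s => s.2.2.2) <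
        condMutInf (cmacJointMeasure nq pq pS px1 px2 chan)
          (fun z => (z.2.2.1, z.2.2.2.1)) (fun z => z.2.2.2.2.2)
          (fun z => z.2.1.2.2.2))) :
    cmacAchievable pS chan 1 := by
  obtain ⟨nq, nu, pq, px1, px2, u1, u2, hpq, hpx1, hpx2, hGK, h11, h12, h13, h14, h21, h22, h23,
    h24⟩ := h
  exact cmac_correlated_sources_rate_one_achievable_general hpS hchan
    ⟨u1, u2, pq, px1, px2, hpq, hpx1, hpx2⟩ hGK.1 ⟨h11, h12, h13, h14⟩ ⟨h21, h22, h23, h24⟩
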